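/- For every pair of real numbers r ≥ s ≥ 0 there exists a constant C = C(r,s) > 0, independent of d, n, and the measure, with the following property. For all integers d ≥ 3 and n with nd ≥ (d+r+1)², and every Marcinkiewicz–Zygmund measure ν ∈ MZ(d; 2(d+2)n), one has sup_{x ∈ S^d} ∫_{S^d} |Φ̃_{d;n,r}(x·y)| (1−x·y)^{s/2} d|ν|(y) ≤ C · d^{1/6} · n^{−s} · |||ν|||_{d;2(d+2)n}. -/

import Mathlib

noncomputable section

open MeasureTheory Real Set
open scoped RealInnerProductSpace

/-- Value at `x` of the orthonormalized Jacobi polynomial `p_n^{(α,β)}`. -/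
def jacobiP (α β : ℝ) (n : ℕ) (x : ℝ) : ℝ :=
  Real.sqrt ((2 * (n : ℝ) + α + β + 1) / 2 ^ (α + β + 1) *
      (Real.Gamma ((n : ℝ) + α + β + 1) * (n.factorial : ℝ) /
        (Real.Gamma ((n : ℝ) + α + 1) * Real.Gamma ((n : ℝ) + β + 1)))) *
    (Real.Gamma (α + n + 1) / ((n.factorial : ℝ) * Real.Gamma (α + β + n + 1))) *
    ∑ m ∈ Finset.range (n + 1),
      (n.choose m : ℝ) * (Real.Gamma (α + β + n + m + 1) / Real.Gamma (α + m + 1)) *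
        ((x - 1) / 2) ^ m

/-- The kernel `K_n^{(α,β)}(x) = Σ_{ℓ<n} p_ℓ^{(α,β)}(1) p_ℓ^{(α,β)}(x)`. -/
def jacobiK (α β : ℝ) (n : ℕ) (x : ℝ) : ℝ :=
  ∑ ℓ ∈ Finset.range n, jacobiP α β ℓ 1 * jacobiP α β ℓ x

/-- The unit sphere `S^d ⊂ ℝ^{d+1}`. -/
abbrev Sph (d : ℕ) := Metric.sphere (0 : EuclideanSpace ℝ (Fin (d + 1))) 1

/-- The rotation invariant Riemannian volume probability measure `μ_d^*` on `S^d`. -/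
def sphMeasure (d : ℕ) : Measure (Sph d) :=
  ((volume : Measure (EuclideanSpace ℝ (Fin (d + 1)))).toSphere Set.univ)⁻¹ •
    (volume : Measure (EuclideanSpace ℝ (Fin (d + 1)))).toSphere

/-- `f : S^d → ℝ` is the restriction to the sphere of an algebraic polynomial in `d+1`
variables of total degree `< n`, i.e. `f ∈ Π_n^d`. -/
def IsSphPoly (d : ℕ) (n : ℝ) (f : Sph d → ℝ) : Prop :=
  ∃ p : MvPolynomial (Fin (d + 1)) ℝ, (p.totalDegree : ℝ) < n ∧
    ∀ y : Sph d, f y = MvPolynomial.eval (fun i => (y : EuclideanSpace ℝ (Fin (d + 1))) i) p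

/-- Integral of `f` with respect to a signed measure (via the Jordan decomposition). -/
def sInt {X : Type*} [MeasurableSpace X] (ν : SignedMeasure X) (f : X → ℝ) : ℝ :=
  (∫ x, f x ∂ν.toJordanDecomposition.posPart) - ∫ x, f x ∂ν.toJordanDecomposition.negPart

/-- Integral of `f` over a set `s` with respect to a signed measure. -/
def sIntOn {X : Type*} [MeasurableSpace X] (ν : SignedMeasure X) (s : Set X) (f : X → ℝ) : ℝ :=
  (∫ x in s, f x ∂ν.toJordanDecomposition.posPart) -
    ∫ x in s, f x ∂ν.toJordanDecomposition.negPart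

/-- `ν` is a quadrature measure of order `n` on `S^d`. -/
def IsQuadrature (d : ℕ) (n : ℝ) (ν : SignedMeasure (Sph d)) : Prop :=
  ∀ f : Sph d → ℝ, IsSphPoly d n f → sInt ν f = ∫ y, f y ∂sphMeasure d

/-- `ν` satisfies the Marcinkiewicz-Zygmund inequality of order `n` with constant `c`;
`ν ∈ MZ(d;n)` means this holds for some `c`, and `|||ν|||_{d;n}` is the least such `c`. -/
def IsMZ (d : ℕ) (n : ℝ) (ν : SignedMeasure (Sph d)) (c : ℝ) : Prop :=
  ∀ f : Sph d → ℝ, IsSphPoly d (n / 2) f →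
    (∫ y, (f y) ^ 2 ∂ν.totalVariation) ≤ c * ∫ y, (f y) ^ 2 ∂sphMeasure d

/-- `ω_d`, the volume of `S^d`. -/
def omegaS (d : ℕ) : ℝ := 2 * Real.pi ^ (((d : ℝ) + 1) / 2) / Real.Gamma (((d : ℝ) + 1) / 2)

/-- The reproducing kernel `K_{d;n}` of `Π_n^d`. -/
def sphK (d n : ℕ) (x : ℝ) : ℝ :=
  (omegaS d / omegaS (d - 1)) * jacobiK ((d : ℝ) / 2 - 1) ((d : ℝ) / 2 - 1) n x

/-- The kernel `Φ̃_{d;n,r}`. -/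
def PhiTilde (d n : ℕ) (r : ℝ) (x : ℝ) : ℝ :=
  sphK d ((d + 2) * n) x *
    (jacobiP ((d : ℝ) / 2 + r) ((d : ℝ) / 2 - 2) (d * n) x /
      jacobiP ((d : ℝ) / 2 + r) ((d : ℝ) / 2 - 2) (d * n) 1)

/-- The kernel `Φ_{d;n,r}`. -/
def Phi (d n : ℕ) (r : ℝ) (x : ℝ) : ℝ := PhiTilde d n r x * ((1 + x) / 2) ^ n

/-- The inner product `x·y` of two points of `S^d`. -/
def ip {d : ℕ} (x y : Sph d) : ℝ :=
  ⟪(x : EuclideanSpace ℝ (Fin (d + 1))), (y : EuclideanSpace ℝ (Fin (d + 1)))⟫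

/-- The operator `σ_{d;n,r}(ν, f)`. -/
def sigmaOp (d n : ℕ) (r : ℝ) (ν : SignedMeasure (Sph d)) (f : Sph d → ℝ) (x : Sph d) : ℝ :=
  sInt ν (fun y => f y * Phi d n r (ip x y))

/-- The operator `σ̃_{d;n,r}(ν, f)`. -/
def sigmaTildeOp (d n : ℕ) (r : ℝ) (ν : SignedMeasure (Sph d)) (f : Sph d → ℝ) (x : Sph d) : ℝ :=
  sInt ν (fun y => f y * PhiTilde d n r (ip x y))

/-- The uniform (supremum) norm `‖f‖_∞`. -/
def supNorm {X : Type*} (f : X → ℝ) : ℝ := sSup (Set.range fun x => |f x|)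

/-- `E_{d;n}(f)`, the degree of approximation of `f` from `Π_n^d` in the uniform norm. -/
def bestApprox (d : ℕ) (n : ℝ) (f : Sph d → ℝ) : ℝ :=
  sInf {t | ∃ g, IsSphPoly d n g ∧ ∀ y, |f y - g y| ≤ t}

/-- `dim Π_n^d = (2n+d−2)·Γ(n+d−1)/(Γ(n)·Γ(d+1))` (for `n ≥ 2`). -/
def dimPi (d n : ℕ) : ℝ :=
  (2 * (n : ℝ) + d - 2) * Real.Gamma ((n : ℝ) + d - 1) /
    (Real.Gamma n * Real.Gamma ((d : ℝ) + 1))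


/-! ## Beta integrals -/

/-- the Beta weight -/
def bw (a b u : ℝ) : ℝ := u ^ (a - 1) * (1 - u) ^ (b - 1)

lemma bw_pos {a b u : ℝ} (hu : u ∈ Ioo (0:ℝ) 1) : 0 < bw a b u :=
  mul_pos (rpow_pos_of_pos hu.1 _) (rpow_pos_of_pos (by linarith [hu.2]) _)

lemma bw_integrable {a b : ℝ} (ha : 0 < a) (hb : 0 < b) : IntegrableOn (bw a b) (Ioo 0 1) := by
  have h := Complex.betaIntegral_convergent (u := a) (v := b) (by simpa) (by simpa)
  rw [intervalIntegrable_iff_integrableOn_Ioo_of_le (by simp)] at h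
  have h2 := h.re
  refine (integrableOn_congr_fun ?_ measurableSet_Ioo).mp h2
  intro x hx
  have e1 : ((x:ℂ)) ^ ((a:ℂ) - 1) = ((x ^ (a-1) : ℝ) : ℂ) := by
    rw [Complex.ofReal_cpow hx.1.le]; push_cast; rfl
  have e2 : (1 - (x:ℂ)) ^ ((b:ℂ) - 1) = (((1-x) ^ (b-1) : ℝ) : ℂ) := by
    rw [Complex.ofReal_cpow (by linarith [hx.2])]; push_cast; rfl
  simp only [e1, e2, bw]
  rw [← Complex.ofReal_mul]; simp

lemma bw_integral {a b : ℝ} (ha : 0 < a) (hb : 0 < b) :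
    ∫ u in Ioo (0:ℝ) 1, bw a b u = Gamma a * Gamma b / Gamma (a + b) := by
  have h := ProbabilityTheory.beta_eq_betaIntegralReal a b ha hb
  rw [ProbabilityTheory.beta] at h
  rw [h, Complex.betaIntegral, intervalIntegral.integral_of_le (by norm_num),
      integral_Ioc_eq_integral_Ioo, ← RCLike.re_to_complex, ← integral_re]
  · refine setIntegral_congr_fun measurableSet_Ioo fun x hx ↦ ?_
    have e1 : ((x:ℂ)) ^ ((a:ℂ) - 1) = ((x ^ (a-1) : ℝ) : ℂ) := by
      rw [Complex.ofReal_cpow hx.1.le]; push_cast; rfl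
    have e2 : (1 - (x:ℂ)) ^ ((b:ℂ) - 1) = (((1-x) ^ (b-1) : ℝ) : ℂ) := by
      rw [Complex.ofReal_cpow (by linarith [hx.2])]; push_cast; rfl
    simp only [e1, e2, bw]
    rw [← Complex.ofReal_mul]; simp
  · have h := Complex.betaIntegral_convergent (u := a) (v := b) (by simpa) (by simpa)
    rw [intervalIntegrable_iff_integrableOn_Ioo_of_le (by simp)] at h
    exact h

lemma mul_bw_integrable {a b : ℝ} (ha : 0 < a) (hb : 0 < b) {f : ℝ → ℝ} (hf : Continuous f) :
    IntegrableOn (fun u => f u * bw a b u) (Ioo 0 1) := by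
  obtain ⟨C, hC⟩ := isCompact_Icc.exists_bound_of_continuousOn (s := Icc (0:ℝ) 1) hf.continuousOn
  refine Integrable.bdd_mul (c := C) (bw_integrable ha hb) hf.aestronglyMeasurable ?_
  filter_upwards [ae_restrict_mem measurableSet_Ioo] with x hx
  exact hC x ⟨hx.1.le, hx.2.le⟩

lemma pow_mul_bw {a b u : ℝ} (k : ℕ) (hu : u ∈ Ioo (0:ℝ) 1) :
    u ^ k * bw a b u = bw (a + k) b u := by
  unfold bw
  rw [← mul_assoc, ← rpow_natCast u k, ← rpow_add hu.1]
  congr 2; ring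

lemma pow_bw_integral {a b : ℝ} (ha : 0 < a) (hb : 0 < b) (k : ℕ) :
    ∫ u in Ioo (0:ℝ) 1, u ^ k * bw a b u
      = Gamma (a + k) * Gamma b / Gamma (a + k + b) := by
  rw [← bw_integral (by positivity) hb]
  exact setIntegral_congr_fun measurableSet_Ioo fun x hx ↦ pow_mul_bw k hx

/-! ## Alternating sums -/

lemma alt_sum_zero (S : Polynomial ℝ) (n : ℕ) (h : S.natDegree < n) :
    ∑ m ∈ Finset.range (n + 1), (n.choose m : ℝ) * (-1) ^ m * S.eval (m : ℝ) = 0 := by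
  have h1 := congrFun (Polynomial.fwdDiff_iter_eq_zero_of_degree_lt h) 0
  rw [fwdDiff_iter_eq_sum_shift] at h1
  simp only [Pi.zero_apply, zsmul_eq_mul, Int.cast_mul, Int.cast_pow, Int.cast_neg, Int.cast_one,
    Int.cast_natCast, nsmul_eq_mul, mul_one, zero_add] at h1
  have : ∑ m ∈ Finset.range (n + 1), (n.choose m : ℝ) * (-1) ^ m * S.eval (m : ℝ)
      = (-1) ^ n * ∑ k ∈ Finset.range (n + 1), (-1) ^ (n - k) * (n.choose k : ℝ) * S.eval (k : ℝ) := by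
    rw [Finset.mul_sum]
    refine Finset.sum_congr rfl fun m hm => ?_
    have hm' : m ≤ n := by simpa [Nat.lt_succ_iff] using hm
    obtain ⟨j, rfl⟩ := Nat.exists_eq_add_of_le hm'
    simp only [Nat.add_sub_cancel_left, pow_add]
    have : (-1:ℝ)^j * (-1)^j = 1 := by rw [← mul_pow]; simp
    linear_combination (-(((m+j).choose m : ℝ)) * (-1)^m * S.eval (m:ℝ)) * this
  rw [this, h1, mul_zero]

lemma alt_sum_inv (n : ℕ) : ∀ z : ℝ, 0 < z →
    ∑ m ∈ Finset.range (n + 1), (n.choose m : ℝ) * (-1) ^ m * (1 / ((m : ℝ) + z))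
      = n.factorial * Gamma z / Gamma (z + n + 1) := by
  intro z hz
  have h := bw_integral hz (show (0:ℝ) < n + 1 by positivity)
  rw [Gamma_nat_eq_factorial, ← add_assoc] at h
  rw [mul_comm (n.factorial : ℝ), ← h]
  have : ∀ u ∈ Ioo (0:ℝ) 1, bw z (n+1) u
      = ∑ m ∈ Finset.range (n + 1), (n.choose m : ℝ) * (-1) ^ m * (u ^ m * bw z 1 u) := by
    intro u hu
    have : (1 - u) ^ ((n:ℝ) + 1 - 1) = ∑ m ∈ Finset.range (n + 1), (n.choose m : ℝ) * (-1) ^ m * u ^ m := by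
      rw [add_sub_cancel_right, rpow_natCast, sub_eq_add_neg, add_comm, add_pow]
      refine Finset.sum_congr rfl fun m hm => ?_
      rw [neg_pow]; simp; ring
    unfold bw
    rw [this, Finset.mul_sum]
    refine Finset.sum_congr rfl fun m hm => ?_
    simp; ring
  rw [setIntegral_congr_fun measurableSet_Ioo this, integral_finsetSum]
  · refine Finset.sum_congr rfl fun m hm => ?_
    rw [integral_const_mul, pow_bw_integral hz one_pos]
    have : Gamma (z + m + 1) = (z + m) * Gamma (z + m) := Gamma_add_one (by positivity)
    rw [this]
    have : Gamma (z + m) ≠ 0 := (Gamma_pos_of_pos (by positivity)).ne'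
    have : z + m ≠ 0 := by positivity
    simp only [Gamma_one]
    rw [add_comm (m:ℝ) z]
    field_simp
  · intro m hm
    exact (mul_bw_integrable hz one_pos (by fun_prop : Continuous fun u : ℝ => u ^ m)).const_mul _

lemma alt_sum_main (R : Polynomial ℝ) (n : ℕ) (h : R.natDegree ≤ n) (z : ℝ) (hz : 0 < z) :
    ∑ m ∈ Finset.range (n + 1), (n.choose m : ℝ) * (-1) ^ m * (R.eval (m : ℝ) / ((m : ℝ) + z))
      = R.eval (-z) * (n.factorial * Gamma z / Gamma (z + n + 1)) := by
  rcases Nat.eq_zero_or_pos n with rfl | hn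
  · have hc := Polynomial.eq_C_of_natDegree_le_zero h
    rw [hc]
    have := alt_sum_inv 0 z hz
    simp at this ⊢
    rw [← this]; field_simp
  obtain ⟨S, hS⟩ := Polynomial.X_sub_C_dvd_sub_C_eval (a := -z) (p := R)
  have hRe : ∀ t, R.eval t = R.eval (-z) + (t + z) * S.eval t := by
    intro t
    have := congrArg (Polynomial.eval t) hS
    simp at this
    linarith
  have hdeg : S.natDegree < n := by
    by_cases h0 : S = 0
    · simp [h0, hn]
    have h1 : (R - Polynomial.C (R.eval (-z))).natDegree ≤ n := by
      refine (Polynomial.natDegree_sub_le _ _).trans ?_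
      simp [h]
    rw [hS, Polynomial.natDegree_mul (Polynomial.X_sub_C_ne_zero _) h0,
      Polynomial.natDegree_X_sub_C] at h1
    omega
  have h2 := alt_sum_zero S n hdeg
  rw [← alt_sum_inv n z hz, Finset.mul_sum]
  rw [← sub_eq_zero, ← Finset.sum_sub_distrib, ← h2]
  refine Finset.sum_congr rfl fun m hm => ?_
  rw [hRe m]
  have : (m:ℝ) + z ≠ 0 := by positivity
  field_simp
  ring



/-! ## Jacobi polynomials in the variable `u = (1-x)/2` -/

/-- coefficients of the Jacobi polynomial in `u = (1-x)/2` -/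
def yc (α β : ℝ) (N m : ℕ) : ℝ :=
  (N.choose m : ℝ) * (Gamma (α + β + N + m + 1) / Gamma (α + m + 1)) * (-1) ^ m

/-- unnormalised Jacobi polynomial in `u = (1-x)/2` -/
def Yp (α β : ℝ) (N : ℕ) : Polynomial ℝ :=
  ∑ m ∈ Finset.range (N + 1), Polynomial.C (yc α β N m) * Polynomial.X ^ m

lemma Yp_coeff (α β : ℝ) (N m : ℕ) : (Yp α β N).coeff m = yc α β N m := by
  unfold Yp
  rw [Polynomial.finsetSum_coeff]
  simp only [Polynomial.coeff_C_mul_X_pow]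
  rw [Finset.sum_ite_eq]
  split_ifs with h
  · rfl
  · have : N < m := by simpa using h
    simp [yc, Nat.choose_eq_zero_of_lt this]

lemma Yp_natDegree (α β : ℝ) (N : ℕ) : (Yp α β N).natDegree ≤ N := by
  rw [Polynomial.natDegree_le_iff_coeff_eq_zero]
  intro m hm
  rw [Yp_coeff]; simp [yc, Nat.choose_eq_zero_of_lt hm]

lemma Yp_eval (α β : ℝ) (N : ℕ) (u : ℝ) :
    (Yp α β N).eval u = ∑ m ∈ Finset.range (N + 1), yc α β N m * u ^ m := by
  simp [Yp, Polynomial.eval_finsetSum]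

lemma Yp_eval_zero (α β : ℝ) (N : ℕ) :
    (Yp α β N).eval 0 = Gamma (α + β + N + 1) / Gamma (α + 1) := by
  rw [← Polynomial.coeff_zero_eq_eval_zero, Yp_coeff]; simp [yc]

/-- normalising factor -/
def nrm (α β : ℝ) (n : ℕ) : ℝ :=
  Real.sqrt ((2 * (n : ℝ) + α + β + 1) / 2 ^ (α + β + 1) *
      (Real.Gamma ((n : ℝ) + α + β + 1) * (n.factorial : ℝ) /
        (Real.Gamma ((n : ℝ) + α + 1) * Real.Gamma ((n : ℝ) + β + 1)))) *
    (Real.Gamma (α + n + 1) / ((n.factorial : ℝ) * Real.Gamma (α + β + n + 1)))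

lemma jacobiP_eq (α β : ℝ) (n : ℕ) (x : ℝ) :
    jacobiP α β n x = nrm α β n * (Yp α β n).eval ((1 - x) / 2) := by
  unfold jacobiP nrm
  rw [Yp_eval]
  congr 1
  refine Finset.sum_congr rfl fun m hm => ?_
  rw [yc, mul_assoc _ ((-1:ℝ)^m), ← mul_pow]
  congr 2; ring

lemma Gamma_add_nat (x : ℝ) (hx : 0 < x) (k : ℕ) :
    Gamma (x + k) = (ascPochhammer ℝ k).eval x * Gamma x := by
  induction k with
  | zero => simp
  | succ k ih =>
    have : x + ((k + 1 : ℕ) : ℝ) = (x + k) + 1 := by push_cast; ring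
    rw [this, Gamma_add_one (by positivity), ih, ascPochhammer_succ_eval]; ring

lemma poly_int {a b : ℝ} (ha : 0 < a) (hb : 0 < b) (q : Polynomial ℝ) :
    IntegrableOn (fun u => q.eval u * bw a b u) (Ioo 0 1) :=
  mul_bw_integrable ha hb q.continuous

lemma Yp_mul_integral {a b : ℝ} (ha : 0 < a) (hb : 0 < b) (α β : ℝ) (N k : ℕ) :
    ∫ u in Ioo (0:ℝ) 1, (Yp α β N).eval u * u ^ k * bw a b u
      = ∑ m ∈ Finset.range (N + 1), yc α β N m *
          (Gamma (a + (m + k : ℕ)) * Gamma b / Gamma (a + (m + k : ℕ) + b)) := by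
  have : ∀ u ∈ Ioo (0:ℝ) 1, (Yp α β N).eval u * u ^ k * bw a b u
      = ∑ m ∈ Finset.range (N + 1), yc α β N m * (u ^ (m + k) * bw a b u) := by
    intro u hu
    rw [Yp_eval, Finset.sum_mul, Finset.sum_mul]
    refine Finset.sum_congr rfl fun m hm => ?_
    ring
  rw [setIntegral_congr_fun measurableSet_Ioo this, integral_finsetSum]
  · refine Finset.sum_congr rfl fun m hm => ?_
    rw [integral_const_mul, pow_bw_integral ha hb]
  · intro m hm
    exact (mul_bw_integrable ha hb (by fun_prop : Continuous fun u : ℝ => u ^ (m + k))).const_mul _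

lemma asc_neg (l : ℕ) (β : ℝ) :
    (ascPochhammer ℝ l).eval (-(β + l)) = (-1) ^ l * (ascPochhammer ℝ l).eval (β + 1) := by
  rw [ascPochhammer_eval_neg_eq_descPochhammer, descPochhammer_eval_eq_ascPochhammer]
  congr 2; ring

lemma asc_comp_natDegree (k : ℕ) (c : ℝ) :
    ((ascPochhammer ℝ k).comp (Polynomial.X + Polynomial.C c)).natDegree = k := by
  rw [Polynomial.natDegree_comp, Polynomial.natDegree_X_add_C, ascPochhammer_natDegree, mul_one]

lemma Yp_moment {α β : ℝ} (hα : -1 < α) (hβ : -1 < β) (hs : 0 < α + β + 1) (l k : ℕ) (hk : k ≤ l) :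
    ∫ u in Ioo (0:ℝ) 1, (Yp α β l).eval u * u ^ k * bw (α+1) (β+1) u
      = if k = l then (-1) ^ l * (Gamma (β + l + 1) *
          (l.factorial * Gamma (α + β + l + 1) / Gamma (α + β + 2 * l + 2))) else 0 := by
  rw [Yp_mul_integral (by linarith) (by linarith)]
  set R : Polynomial ℝ := (ascPochhammer ℝ k).comp (Polynomial.X + Polynomial.C (α + 1)) *
    (ascPochhammer ℝ (l - k)).comp (Polynomial.X + Polynomial.C (α + β + k + 1)) with hR
  have hRd : R.natDegree ≤ l := by
    refine Polynomial.natDegree_mul_le.trans ?_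
    rw [asc_comp_natDegree, asc_comp_natDegree]; omega
  have key := alt_sum_main R l hRd (α + β + k + 1) (by linarith [Nat.cast_nonneg (α := ℝ) k])
  have e : ∑ m ∈ Finset.range (l + 1), yc α β l m *
          (Gamma (α + 1 + (m + k : ℕ)) * Gamma (β + 1) / Gamma (α + 1 + (m + k : ℕ) + (β + 1)))
      = Gamma (β + 1) * ∑ m ∈ Finset.range (l + 1), (l.choose m : ℝ) * (-1) ^ m *
        (R.eval (m : ℝ) / ((m : ℝ) + (α + β + k + 1))) := by
    rw [Finset.mul_sum]
    refine Finset.sum_congr rfl fun m hm => ?_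
    have p1 : 0 < α + m + 1 := by have : (0:ℝ) ≤ m := by positivity
                                  linarith
    have p2 : 0 < α + β + m + k + 1 := by linarith [Nat.cast_nonneg (α := ℝ) m, Nat.cast_nonneg (α := ℝ) k]
    have g1 := Gamma_add_nat (α + m + 1) p1 k
    have g2 := Gamma_add_nat (α + β + m + k + 1) p2 (l - k)
    have g3 := Gamma_add_one p2.ne'
    have n1 := (Gamma_pos_of_pos p1).ne'
    have n2 := (Gamma_pos_of_pos p2).ne'
    have hRm : R.eval (m:ℝ) = (ascPochhammer ℝ k).eval (α + m + 1) *
        (ascPochhammer ℝ (l-k)).eval (α + β + m + k + 1) := by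
      simp only [hR, Polynomial.eval_mul, Polynomial.eval_comp, Polynomial.eval_add,
        Polynomial.eval_X, Polynomial.eval_C]
      congr 2 <;> ring
    rw [hRm, yc]
    push_cast [Nat.cast_sub hk] at g2 ⊢
    have a1 : α + 1 + ((m:ℝ) + k) = α + m + 1 + k := by ring
    have a2 : α + m + 1 + k + (β + 1) = α + β + m + k + 1 + 1 := by ring
    have a3 : α + β + l + m + 1 = α + β + m + k + 1 + (l - k) := by ring
    rw [a1, a2, a3, g1, g2, g3]
    have a4 : (m:ℝ) + (α + β + k + 1) = α + β + m + k + 1 := by ring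
    rw [a4]
    have := p2.ne'
    field_simp
  rw [e, key]
  have hRz : R.eval (-(α + β + k + 1)) = (ascPochhammer ℝ k).eval (-(β + k)) *
      (ascPochhammer ℝ (l - k)).eval 0 := by
    simp only [hR, Polynomial.eval_mul, Polynomial.eval_comp, Polynomial.eval_add,
        Polynomial.eval_X, Polynomial.eval_C]
    congr 2 <;> ring
  rw [hRz]
  split_ifs with h
  · subst h
    have g := Gamma_add_nat (β + 1) (by linarith) k
    rw [asc_neg]
    have a1 : β + k + 1 = β + 1 + k := by ring
    have a2 : α + β + k + 1 + k + 1 = α + β + 2 * k + 2 := by ring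
    rw [a1, g, a2]
    simp
    ring
  · have : l - k ≠ 0 := by omega
    rw [ascPochhammer_eval_zero]
    simp [this]

lemma Yp_orth {α β : ℝ} (hα : -1 < α) (hβ : -1 < β) (hs : 0 < α + β + 1) (l : ℕ)
    (q : Polynomial ℝ) (hq : q.natDegree ≤ l) :
    ∫ u in Ioo (0:ℝ) 1, (Yp α β l).eval u * q.eval u * bw (α+1) (β+1) u
      = q.coeff l * ((-1) ^ l * (Gamma (β + l + 1) *
          (l.factorial * Gamma (α + β + l + 1) / Gamma (α + β + 2 * l + 2)))) := by
  have : ∀ u ∈ Ioo (0:ℝ) 1, (Yp α β l).eval u * q.eval u * bw (α+1) (β+1) u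
      = ∑ k ∈ Finset.range (l + 1), q.coeff k * ((Yp α β l).eval u * u ^ k * bw (α+1) (β+1) u) := by
    intro u hu
    rw [Polynomial.eval_eq_sum_range' (Nat.lt_succ_of_le hq), Finset.mul_sum, Finset.sum_mul]
    refine Finset.sum_congr rfl fun m hm => ?_
    ring
  rw [setIntegral_congr_fun measurableSet_Ioo this, integral_finsetSum]
  · have : ∀ k ∈ Finset.range (l+1), ∫ u in Ioo (0:ℝ) 1, q.coeff k * ((Yp α β l).eval u * u ^ k * bw (α+1) (β+1) u)
       = if k = l then q.coeff k * ((-1) ^ l * (Gamma (β + l + 1) *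
          (l.factorial * Gamma (α + β + l + 1) / Gamma (α + β + 2 * l + 2)))) else 0 := by
      intro k hk
      rw [integral_const_mul, Yp_moment hα hβ hs l k (by simpa [Nat.lt_succ_iff] using hk)]
      split_ifs <;> simp
    rw [Finset.sum_congr rfl this, Finset.sum_ite_eq']
    simp
  · intro m hm
    exact (mul_bw_integrable (by linarith) (by linarith)
      ((Yp α β l).continuous.mul (continuous_pow m))).const_mul _

lemma Yp_sq {α β : ℝ} (hα : -1 < α) (hβ : -1 < β) (hs : 0 < α + β + 1) (l : ℕ) :
    ∫ u in Ioo (0:ℝ) 1, (Yp α β l).eval u * (Yp α β l).eval u * bw (α+1) (β+1) u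
      = Gamma (β + l + 1) * l.factorial * Gamma (α + β + l + 1) /
        (Gamma (α + l + 1) * (α + β + 2 * l + 1)) := by
  rw [Yp_orth hα hβ hs l _ (Yp_natDegree _ _ _), Yp_coeff, yc]
  have l0 : (0:ℝ) ≤ l := by positivity
  have p1 : 0 < α + l + 1 := by linarith
  have p2 : 0 < α + β + 2 * l + 1 := by linarith [Nat.cast_nonneg (α := ℝ) l]
  have g := Gamma_add_one p2.ne'
  have n1 := (Gamma_pos_of_pos p1).ne'
  have n2 := (Gamma_pos_of_pos p2).ne'
  have a1 : α + β + l + l + 1 = α + β + 2 * l + 1 := by ring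
  have a2 : α + β + 2 * l + 2 = α + β + 2 * l + 1 + 1 := by ring
  rw [a1, a2, g]
  have : ((-1:ℝ)^l) * (-1)^l = 1 := by rw [← mul_pow]; simp
  simp only [Nat.choose_self, Nat.cast_one, one_mul]
  field_simp
  rw [← pow_mul, mul_comm l 2, pow_mul]; simp

/-- the exact inverse moment -/
lemma Yp_inv_moment {α β : ℝ} (hα : 0 < α) (hβ : -1 < β) (hs : 0 < α + β + 1) (N : ℕ) :
    ∫ u in Ioo (0:ℝ) 1, (Yp α β N).eval u ^ 2 * bw α (β+1) u
      = (Yp α β N).eval 0 * (Gamma (β + N + 1) * N.factorial * Gamma α / Gamma (α + N + 1)) := by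
  obtain ⟨q, hq⟩ := Polynomial.X_sub_C_dvd_sub_C_eval (a := 0) (p := Yp α β N)
  have hqe : ∀ u, (Yp α β N).eval u = (Yp α β N).eval 0 + u * q.eval u := by
    intro t
    have := congrArg (Polynomial.eval t) hq
    simp at this
    linarith
  have h1 : ∫ u in Ioo (0:ℝ) 1, (Yp α β N).eval u * q.eval u * bw (α+1) (β+1) u = 0 := by
    have hq0 : q.coeff N = 0 := by
      have := congrArg (fun p => p.coeff (N+1)) hq
      simp only [Polynomial.C_0, sub_zero, Polynomial.coeff_X_mul, Polynomial.coeff_sub,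
        Polynomial.coeff_C_succ, Yp_coeff] at this
      rw [← this]; simp [yc]
    have hqd : q.natDegree ≤ N := by
      rw [Polynomial.natDegree_le_iff_coeff_eq_zero]
      intro m hm
      have := congrArg (fun p => p.coeff (m+1)) hq
      simp only [Polynomial.C_0, sub_zero, Polynomial.coeff_X_mul, Polynomial.coeff_sub,
        Polynomial.coeff_C_succ, Yp_coeff] at this
      rw [← this]; simp [yc, Nat.choose_eq_zero_of_lt (show N < m + 1 by omega)]
    rw [Yp_orth (by linarith) hβ hs N q hqd, hq0, zero_mul]
  have h2 : ∫ u in Ioo (0:ℝ) 1, (Yp α β N).eval u ^ 2 * bw α (β+1) u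
      = ∫ u in Ioo (0:ℝ) 1, ((Yp α β N).eval 0 * ((Yp α β N).eval u * u ^ 0 * bw α (β+1) u)
         + (Yp α β N).eval u * q.eval u * bw (α+1) (β+1) u) := by
    refine setIntegral_congr_fun measurableSet_Ioo fun u hu => ?_
    have := pow_mul_bw (a := α) (b := β + 1) 1 hu
    simp only [Nat.cast_one, pow_one] at this
    simp only [← this]
    have e := hqe u
    rw [sq]; nth_rewrite 2 [e]; ring
  rw [h2, integral_add, h1, add_zero, integral_const_mul]
  · congr 1
    rw [Yp_mul_integral hα (by linarith)]
    set R : Polynomial ℝ :=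
      (ascPochhammer ℝ N).comp (Polynomial.X + Polynomial.C (α + β + 1)) with hR
    have hRd : R.natDegree ≤ N := (asc_comp_natDegree _ _).le
    have key := alt_sum_main R N hRd α hα
    have hRz : R.eval (-α) = (ascPochhammer ℝ N).eval (β + 1) := by
      simp only [hR, Polynomial.eval_comp, Polynomial.eval_add,
        Polynomial.eval_X, Polynomial.eval_C]
      congr 1; ring
    have g := Gamma_add_nat (β + 1) (by linarith) N
    have a1 : β + N + 1 = β + 1 + N := by ring
    rw [a1, g]
    trans Gamma (β + 1) * (R.eval (-α) * (N.factorial * Gamma α / Gamma (α + N + 1)))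
    · rw [← key, Finset.mul_sum]
      refine Finset.sum_congr rfl fun m hm => ?_
      have p1 : 0 < α + m := by positivity
      have p2 : 0 < α + β + m + 1 := by linarith [Nat.cast_nonneg (α := ℝ) m]
      have g1 := Gamma_add_one p1.ne'
      have g2 := Gamma_add_nat (α + β + m + 1) p2 N
      have n1 := (Gamma_pos_of_pos p1).ne'
      have n2 := (Gamma_pos_of_pos p2).ne'
      have hRm : R.eval (m:ℝ) = (ascPochhammer ℝ N).eval (α + β + m + 1) := by
        simp only [hR, Polynomial.eval_comp, Polynomial.eval_add,
          Polynomial.eval_X, Polynomial.eval_C]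
        congr 1; ring
      rw [hRm, yc]
      have a3 : α + β + N + m + 1 = α + β + m + 1 + N := by ring
      have a4 : α + (m:ℝ) + (β + 1) = α + β + m + 1 := by ring
      rw [add_zero, a3, a4, g1, g2, add_comm (m:ℝ) α]
      have := p1.ne'
      field_simp
    · rw [hRz]; ring
  · exact (mul_bw_integrable hα (by linarith)
      ((Yp α β N).continuous.mul (continuous_pow 0))).const_mul _
  · exact mul_bw_integrable (by linarith) (by linarith) ((Yp α β N).continuous.mul q.continuous)

lemma yc_rec {α β : ℝ} (hα : -1 < α) (hs : 0 < α + β + 1) (N n : ℕ) :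
    ((n:ℝ) + 1) * (n + 1 + α) * yc α β N (n + 1)
      = (n - N) * (n + N + α + β + 1) * yc α β N n := by
  have n0 : (0:ℝ) ≤ n := by positivity
  have p1 : 0 < α + n + 1 := by linarith
  have p2 : 0 < α + β + N + n + 1 := by linarith [Nat.cast_nonneg (α := ℝ) N, Nat.cast_nonneg (α := ℝ) n]
  have n1 := (Gamma_pos_of_pos p1).ne'
  have hch : (N.choose (n + 1) : ℝ) * (n + 1) = N.choose n * (N - n) := by
    rcases le_or_gt n N with h | h
    · have := Nat.choose_succ_right_eq N n
      rw [← Nat.cast_sub h]; exact_mod_cast this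
    · simp [Nat.choose_eq_zero_of_lt h, Nat.choose_eq_zero_of_lt (show N < n + 1 by omega)]
  unfold yc
  push_cast
  have a1 : α + β + N + (n + 1) + 1 = α + β + N + n + 1 + 1 := by ring
  have a2 : α + (n + 1) + 1 = α + n + 1 + 1 := by ring
  rw [a1, a2, Gamma_add_one p1.ne', Gamma_add_one p2.ne', pow_succ]
  have := p1.ne'
  field_simp
  linear_combination (-(α + β + N + n + 1) * (α + n + 1)) * hch

lemma Yp_ode {α β : ℝ} (hα : -1 < α) (hs : 0 < α + β + 1) (N : ℕ) (u : ℝ) :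
    u * (1 - u) * (Yp α β N).derivative.derivative.eval u
      + (α + 1 - (α + β + 2) * u) * (Yp α β N).derivative.eval u
      + N * (N + α + β + 1) * (Yp α β N).eval u = 0 := by
  set Y := Yp α β N with hY
  have h : Polynomial.X * Y.derivative.derivative - Polynomial.X * (Polynomial.X * Y.derivative.derivative)
      + (Polynomial.C (α + 1) * Y.derivative - Polynomial.C (α + β + 2) * (Polynomial.X * Y.derivative))
      + Polynomial.C (N * (N + α + β + 1)) * Y = 0 := by
    ext n
    have c1 : (Polynomial.X * Y.derivative.derivative).coeff n = n * (n + 1) * Y.coeff (n + 1) := by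
      cases n with
      | zero => simp
      | succ k => simp [Polynomial.coeff_X_mul, Polynomial.coeff_derivative]; ring
    have c2 : (Polynomial.X * (Polynomial.X * Y.derivative.derivative)).coeff n
        = n * (n - 1) * Y.coeff n := by
      rcases n with _ | _ | k
      · simp
      · simp [Polynomial.coeff_X_mul]
      · simp [Polynomial.coeff_X_mul, Polynomial.coeff_derivative]; ring
    have c3 : (Polynomial.X * Y.derivative).coeff n = n * Y.coeff n := by
      cases n with
      | zero => simp
      | succ k => simp [Polynomial.coeff_X_mul, Polynomial.coeff_derivative]; ring
    simp only [Polynomial.coeff_add, Polynomial.coeff_sub, Polynomial.coeff_C_mul, c1, c2, c3,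
      Polynomial.coeff_derivative, Polynomial.coeff_zero]
    rw [hY, Yp_coeff, Yp_coeff]
    linear_combination yc_rec hα hs N n
  have := congrArg (Polynomial.eval u) h
  simp at this
  linarith



/-! ## Hardy type recursion for negative moments -/

lemma bw_ibp {A B : ℝ} (hA : 0 < A) (hB : 0 < B) (q : Polynomial ℝ) :
    ∫ u in Ioo (0:ℝ) 1, (A * (1 - u) * q.eval u - B * u * q.eval u
      + u * (1 - u) * q.derivative.eval u) * bw A B u = 0 := by
  have hIntg := mul_bw_integrable hA hB (f := fun u => A * (1 - u) * q.eval u - B * u * q.eval u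
      + u * (1 - u) * q.derivative.eval u) (by
        have := q.continuous; have := q.derivative.continuous; fun_prop)
  have h := intervalIntegral.integral_eq_sub_of_hasDerivAt_of_le (a := 0) (b := 1)
    (f := fun u : ℝ => u ^ A * (1 - u) ^ B * q.eval u)
    (f' := fun u => (A * (1 - u) * q.eval u - B * u * q.eval u
      + u * (1 - u) * q.derivative.eval u) * bw A B u) zero_le_one ?_ ?_ ?_
  · rw [intervalIntegral.integral_of_le zero_le_one, integral_Ioc_eq_integral_Ioo] at h
    rw [h]; simp [hA.ne', hB.ne']
  · have := q.continuous
    refine ContinuousOn.mul (ContinuousOn.mul ?_ ?_) this.continuousOn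
    · exact (continuous_id.rpow_const (fun x => Or.inr hA.le)).continuousOn
    · exact ((continuous_const.sub continuous_id).rpow_const (fun x => Or.inr hB.le)).continuousOn
  · intro u hu
    have hu' : 0 < 1 - u := by linarith [hu.2]
    have d1 : HasDerivAt (fun u : ℝ => u ^ A) (A * u ^ (A - 1)) u :=
      Real.hasDerivAt_rpow_const (Or.inl hu.1.ne')
    have d2 : HasDerivAt (fun u : ℝ => (1 - u) ^ B) (-1 * B * (1 - u) ^ (B - 1)) u :=
      ((hasDerivAt_id u).const_sub 1).rpow_const (Or.inl hu'.ne')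
    have d3 := (d1.mul d2).mul (q.hasDerivAt u)
    refine d3.congr_deriv ?_
    have e1 : u ^ A = u * u ^ (A - 1) := by
      rw [← rpow_one_add' hu.1.le (by linarith)]; congr 1; ring
    have e2 : (1 - u) ^ B = (1 - u) * (1 - u) ^ (B - 1) := by
      rw [← rpow_one_add' hu'.le (by linarith)]; congr 1; ring
    simp only [Pi.mul_apply]
    rw [e1, e2]
    unfold bw
    ring
  · rw [intervalIntegrable_iff_integrableOn_Ioo_of_le zero_le_one]
    exact hIntg

lemma hardy_step {α β a : ℝ} (hα : 0 < α) (hβ : -1 < β) (hs : 0 < α + β + 1) (ha : a < α) (N : ℕ) :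
    (α ^ 2 - a ^ 2) / 4 * ∫ u in Ioo (0:ℝ) 1, (Yp α β N).eval u ^ 2 * bw (α - a) (β + 1) u
      ≤ (N * (N + α + β + 1) + (α ^ 2 - a ^ 2) / 4 + α * (β + 1) / 2) *
        ∫ u in Ioo (0:ℝ) 1, (Yp α β N).eval u ^ 2 * bw (α - a + 1) (β + 1) u := by
  have hA : 0 < α - a := by linarith
  have hB : 0 < β + 1 := by linarith
  set Y := Yp α β N with hY
  have h0 := bw_ibp hA hB (Polynomial.X * Y * Y.derivative + Polynomial.C (α / 2) * Y ^ 2)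
  set q := (Polynomial.X * Y * Y.derivative + Polynomial.C (α / 2) * Y ^ 2) with hq
  set Λ := (N * (N + α + β + 1) + (α ^ 2 - a ^ 2) / 4 + α * (β + 1) / 2) with hΛ
  have i1 : IntegrableOn (fun u => (α ^ 2 - a ^ 2) / 4 * (Y.eval u ^ 2 * bw (α - a) (β + 1) u)) (Ioo 0 1) :=
    (mul_bw_integrable hA hB (Y.continuous.pow 2)).const_mul _
  have i2 : IntegrableOn (fun u => Λ * (Y.eval u ^ 2 * bw (α - a + 1) (β + 1) u)) (Ioo 0 1) :=
    (mul_bw_integrable (by linarith) hB (Y.continuous.pow 2)).const_mul _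
  rw [← integral_const_mul, ← integral_const_mul, ← sub_nonpos, ← integral_sub i1 i2]
  refine le_trans ?_ h0.le
  refine setIntegral_mono_on (i1.sub i2) (mul_bw_integrable hA hB
    (f := fun u => (α - a) * (1 - u) * q.eval u - (β + 1) * u * q.eval u
      + u * (1 - u) * q.derivative.eval u) (by
        have := q.continuous; have := q.derivative.continuous; fun_prop)) measurableSet_Ioo ?_
  intro u hu
  have hb := pow_mul_bw (a := α - a) (b := β + 1) 1 hu
  simp only [Nat.cast_one, pow_one] at hb
  rw [← hb]
  have hode := Yp_ode (by linarith : -1 < α) hs N u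
  rw [← hY] at hode
  have hw : 0 < bw (α - a) (β + 1) u := bw_pos hu
  have e1 : q.eval u = u * Y.eval u * Y.derivative.eval u + α / 2 * Y.eval u ^ 2 := by
    simp [hq]
  have e2 : q.derivative.eval u = Y.eval u * Y.derivative.eval u + u * Y.derivative.eval u ^ 2
      + u * Y.eval u * Y.derivative.derivative.eval u + α * Y.eval u * Y.derivative.eval u := by
    simp [hq, Polynomial.derivative_pow]; ring
  rw [e1, e2]
  have : (α ^ 2 - a ^ 2) / 4 * (Y.eval u ^ 2) - Λ * (Y.eval u ^ 2 * u) ≤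
     ((α - a) * (1 - u) * (u * Y.eval u * Y.derivative.eval u + α / 2 * Y.eval u ^ 2) -
          (β + 1) * u * (u * Y.eval u * Y.derivative.eval u + α / 2 * Y.eval u ^ 2) +
        u * (1 - u) * (Y.eval u * Y.derivative.eval u + u * Y.derivative.eval u ^ 2
      + u * Y.eval u * Y.derivative.derivative.eval u + α * Y.eval u * Y.derivative.eval u)) := by
    have hsq : 0 ≤ (1 - u) * (u * Y.derivative.eval u + (α - a) / 2 * Y.eval u) ^ 2 :=
      mul_nonneg (by linarith [hu.2]) (sq_nonneg _)
    rw [hΛ]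
    linear_combination hsq + (-(u * Y.eval u)) * hode
  calc _ = ((α ^ 2 - a ^ 2) / 4 * (Y.eval u ^ 2) - Λ * (Y.eval u ^ 2 * u)) * bw (α - a) (β + 1) u := by ring
    _ ≤ _ := mul_le_mul_of_nonneg_right this hw.le

lemma moment_nonneg (α β a b : ℝ) (N : ℕ) :
    0 ≤ ∫ u in Ioo (0:ℝ) 1, (Yp α β N).eval u ^ 2 * bw a b u :=
  setIntegral_nonneg measurableSet_Ioo fun _ hu => mul_nonneg (sq_nonneg _) (bw_pos hu).le

lemma hardy_iter {α β Λ δ : ℝ} (hα : 0 < α) (hβ : -1 < β) (hs : 0 < α + β + 1) (N K : ℕ)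
    (hΛ : N * (N + α + β + 1) + α ^ 2 / 4 + α * (β + 1) / 2 ≤ Λ) (hδ : 0 < δ)
    (hK : ∀ j : ℕ, 1 ≤ j → j ≤ K → (j:ℝ) < α ∧ δ ≤ (α ^ 2 - j ^ 2) / 4) :
    ∫ u in Ioo (0:ℝ) 1, (Yp α β N).eval u ^ 2 * bw (α - K) (β + 1) u
      ≤ (Λ / δ) ^ K * ∫ u in Ioo (0:ℝ) 1, (Yp α β N).eval u ^ 2 * bw α (β + 1) u := by
  induction K with
  | zero => simp
  | succ K ih =>
    have ih' := ih (fun j h1 h2 => hK j h1 (by omega))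
    obtain ⟨h1, h2⟩ := hK (K+1) (by omega) le_rfl
    have h3 := hardy_step hα hβ hs h1 N
    have e : α - ((K+1 : ℕ):ℝ) + 1 = α - K := by push_cast; ring
    rw [e] at h3
    have hΛ0 : 0 ≤ Λ := by
      refine le_trans ?_ hΛ
      have : 0 ≤ (N:ℝ) * (N + α + β + 1) := mul_nonneg (by positivity) (by linarith [Nat.cast_nonneg (α := ℝ) N])
      have : 0 ≤ α * (β + 1) := mul_nonneg hα.le (by linarith)
      positivity
    have m1 := moment_nonneg α β (α - ((K+1 : ℕ):ℝ)) (β + 1) N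
    have m2 := moment_nonneg α β (α - K) (β + 1) N
    have h4 : δ * ∫ u in Ioo (0:ℝ) 1, (Yp α β N).eval u ^ 2 * bw (α - ((K+1:ℕ):ℝ)) (β + 1) u
      ≤ Λ * ∫ u in Ioo (0:ℝ) 1, (Yp α β N).eval u ^ 2 * bw (α - K) (β + 1) u := by
      refine (mul_le_mul_of_nonneg_right h2 m1).trans (h3.trans ?_)
      refine mul_le_mul_of_nonneg_right ?_ m2
      have : 0 ≤ (((K+1:ℕ)):ℝ)^2 := sq_nonneg _
      linarith
    rw [pow_succ']
    calc _ = (δ * ∫ u in Ioo (0:ℝ) 1, (Yp α β N).eval u ^ 2 * bw (α - ((K+1:ℕ):ℝ)) (β + 1) u) / δ := by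
            field_simp
      _ ≤ (Λ * ((Λ / δ) ^ K * ∫ u in Ioo (0:ℝ) 1, (Yp α β N).eval u ^ 2 * bw α (β + 1) u)) / δ := by
            exact div_le_div_of_nonneg_right (h4.trans (mul_le_mul_of_nonneg_left ih' hΛ0)) hδ.le
      _ = _ := by ring

lemma moment_interp {α β : ℝ} (hβ : -1 < β) (N K : ℕ) (hK : (K:ℝ) < α) {b n G : ℝ}
    (hb : 0 ≤ b) (hbK : b ≤ K) (hn : 0 < n)
    (hG : ∫ u in Ioo (0:ℝ) 1, (Yp α β N).eval u ^ 2 * bw (α - K) (β + 1) u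
      ≤ G * n ^ (2 * (K:ℝ)) * ∫ u in Ioo (0:ℝ) 1, (Yp α β N).eval u ^ 2 * bw α (β + 1) u) :
    ∫ u in Ioo (0:ℝ) 1, (Yp α β N).eval u ^ 2 * bw (α - b) (β + 1) u
      ≤ (1 + G) * n ^ (2 * b) * ∫ u in Ioo (0:ℝ) 1, (Yp α β N).eval u ^ 2 * bw α (β + 1) u := by
  set Y := Yp α β N
  have K0 : (0:ℝ) ≤ K := by positivity
  have i1 : IntegrableOn (fun u => n ^ (2*b) * (Y.eval u ^ 2 * bw α (β + 1) u)) (Ioo 0 1) :=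
    (mul_bw_integrable (by linarith) (by linarith) (Y.continuous.pow 2)).const_mul _
  have i2 : IntegrableOn (fun u => n ^ (2*b - 2*K) * (Y.eval u ^ 2 * bw (α - K) (β + 1) u)) (Ioo 0 1) :=
    (mul_bw_integrable (by linarith) (by linarith) (Y.continuous.pow 2)).const_mul _
  have i3 : IntegrableOn (fun u => (Y.eval u ^ 2 * bw (α - b) (β + 1) u)) (Ioo 0 1) :=
    (mul_bw_integrable (by linarith) (by linarith) (Y.continuous.pow 2))
  have h1 : ∫ u in Ioo (0:ℝ) 1, Y.eval u ^ 2 * bw (α - b) (β + 1) u ≤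
      ∫ u in Ioo (0:ℝ) 1, (n ^ (2*b) * (Y.eval u ^ 2 * bw α (β + 1) u)
        + n ^ (2*b - 2*K) * (Y.eval u ^ 2 * bw (α - K) (β + 1) u)) := by
    refine setIntegral_mono_on i3 (i1.add i2) measurableSet_Ioo ?_
    intro u hu
    have e : ∀ c : ℝ, bw (α - c) (β + 1) u = u ^ (-c) * bw α (β + 1) u := by
      intro c
      unfold bw
      rw [← mul_assoc, ← rpow_add hu.1]; congr 2; ring
    rw [e b, e K]
    have hw := bw_pos (a := α) (b := β + 1) hu
    have key : u ^ (-b) ≤ n ^ (2*b) + n ^ (2*b - 2*K) * u ^ (-(K:ℝ)) := by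
      have hz : 0 < n ^ 2 * u := mul_pos (by positivity) hu.1
      have eq : ∀ c : ℝ, u ^ (-c) = n ^ (2*c) * (n ^ 2 * u) ^ (-c) := by
        intro c
        rw [mul_rpow (by positivity) hu.1.le, ← rpow_natCast n 2, ← rpow_mul hn.le, ← mul_assoc,
          ← rpow_add hn]
        simp
      rw [eq b, eq K, ← mul_assoc, ← rpow_add hn]
      have e2 : 2 * b - 2 * (K:ℝ) + 2 * K = 2 * b := by ring
      rw [e2, ← mul_one_add]
      refine mul_le_mul_of_nonneg_left ?_ (by positivity)
      rcases le_total 1 (n ^ 2 * u) with h | h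
      · have := rpow_le_one_of_one_le_of_nonpos h (by linarith : -b ≤ 0)
        have := rpow_nonneg hz.le (-(K:ℝ))
        linarith
      · have := rpow_le_rpow_of_exponent_ge hz h (by linarith : -(K:ℝ) ≤ -b)
        linarith
    calc _ = u ^ (-b) * (Y.eval u ^ 2 * bw α (β + 1) u) := by ring
      _ ≤ (n ^ (2*b) + n ^ (2*b - 2*K) * u ^ (-(K:ℝ))) * (Y.eval u ^ 2 * bw α (β + 1) u) :=
        mul_le_mul_of_nonneg_right key (by positivity)
      _ = _ := by ring
  refine h1.trans ?_
  rw [integral_add i1 i2, integral_const_mul, integral_const_mul]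
  have h2 := mul_le_mul_of_nonneg_left hG (by positivity : 0 ≤ n ^ (2*b - 2*K))
  have e3 : n ^ (2*b - 2*K) * n ^ (2 * (K:ℝ)) = n ^ (2*b) := by
    rw [← rpow_add hn]; congr 1; ring
  calc _ ≤ n ^ (2*b) * (∫ u in Ioo (0:ℝ) 1, Y.eval u ^ 2 * bw α (β + 1) u)
        + n ^ (2*b - 2*K) * (G * n ^ (2 * (K:ℝ)) * ∫ u in Ioo (0:ℝ) 1, Y.eval u ^ 2 * bw α (β + 1) u) := by
        linarith
    _ = _ := by rw [← e3]; ring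



def Gm (m : ℕ) : ℝ := ∫ t : ℝ, t ^ m * exp (-t ^ 2)

theorem Gm_integrable (m : ℕ) : Integrable (fun t : ℝ => t ^ m * exp (-t ^ 2)) := by
  have h := integrable_rpow_mul_exp_neg_mul_sq (b := 1) one_pos (s := (m : ℝ))
    (by have : (0 : ℝ) ≤ m := Nat.cast_nonneg m
        linarith)
  refine h.congr (Filter.Eventually.of_forall fun t => ?_)
  simp [Real.rpow_natCast]

theorem Gm_one : Gm 1 = 0 := by
  have h : ∀ t : ℝ, HasDerivAt (fun t : ℝ => exp (-t ^ 2)) (-2 * (t ^ 1 * exp (-t ^ 2))) t := by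
    intro t
    have h0 : HasDerivAt (fun t : ℝ => -t ^ 2) (-(2 * t)) t := by
      simpa using (hasDerivAt_pow 2 t).fun_neg
    convert h0.exp using 1
    ring
  have := integral_eq_zero_of_hasDerivAt_of_integrable h ((Gm_integrable 1).const_mul (-2))
    (by simpa using Gm_integrable 0)
  rw [integral_const_mul] at this
  unfold Gm
  linarith

theorem Gm_rec (m : ℕ) : Gm (m + 2) = (m + 1) / 2 * Gm m := by
  have h : ∀ t : ℝ, HasDerivAt (fun t : ℝ => t ^ (m + 1) * exp (-t ^ 2))
      ((m + 1) * (t ^ m * exp (-t ^ 2)) - 2 * (t ^ (m + 2) * exp (-t ^ 2))) t := by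
    intro t
    have h0 : HasDerivAt (fun t : ℝ => -t ^ 2) (-(2 * t)) t := by
      simpa using (hasDerivAt_pow 2 t).fun_neg
    have h3 := (hasDerivAt_pow (m + 1) t).fun_mul h0.exp
    have h4 : ((m + 1 : ℕ) : ℝ) * t ^ (m + 1 - 1) * exp (-t ^ 2) +
        t ^ (m + 1) * (exp (-t ^ 2) * -(2 * t)) =
        (m + 1) * (t ^ m * exp (-t ^ 2)) - 2 * (t ^ (m + 2) * exp (-t ^ 2)) := by
      push_cast
      ring
    rw [h4] at h3
    exact h3
  have h2 := integral_eq_zero_of_hasDerivAt_of_integrable h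
    (((Gm_integrable m).const_mul _).sub ((Gm_integrable (m + 2)).const_mul _))
    (Gm_integrable (m + 1))
  rw [integral_sub ((Gm_integrable m).const_mul _) ((Gm_integrable (m + 2)).const_mul _),
    integral_const_mul, integral_const_mul] at h2
  unfold Gm
  linarith

theorem gauss_zonal (d m : ℕ) (x : EuclideanSpace ℝ (Fin (d + 1))) (hx : ‖x‖ = 1) :
    ∫ y : EuclideanSpace ℝ (Fin (d + 1)), ⟪x, y⟫ ^ m * exp (-‖y‖ ^ 2) = Gm m * (Gm 0) ^ d := by
  obtain ⟨b, hb⟩ := Orthonormal.exists_orthonormalBasis_extension_of_card_eq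
    (𝕜 := ℝ) (E := EuclideanSpace ℝ (Fin (d + 1))) (ι := Fin (d + 1)) (by simp)
    (v := fun _ => x) (s := {0}) (by
      constructor
      · intro i; simpa using hx
      · intro i j hij
        exact absurd (Subsingleton.elim i j) hij)
  have hb0 : b 0 = x := hb 0 (by simp)
  have e1 : ∀ y, ⟪x, y⟫ ^ m * exp (-‖y‖ ^ 2) = (fun z : EuclideanSpace ℝ (Fin (d + 1)) =>
      z 0 ^ m * exp (-‖z‖ ^ 2)) (b.repr y) := by
    intro y
    simp [OrthonormalBasis.repr_apply_apply, hb0]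
  rw [integral_congr_ae (Filter.Eventually.of_forall e1)]
  refine (b.measurePreserving_repr.integral_comp b.repr.toHomeomorph.measurableEmbedding
    (fun z : EuclideanSpace ℝ (Fin (d + 1)) => z 0 ^ m * exp (-‖z‖ ^ 2))).trans ?_
  rw [← (EuclideanSpace.volume_preserving_symm_measurableEquiv_toLp (Fin (d+1))).symm.integral_comp
     (MeasurableEquiv.measurableEmbedding _)]
  have e2 : ∀ z : Fin (d + 1) → ℝ,
      (fun z : EuclideanSpace ℝ (Fin (d + 1)) => z 0 ^ m * exp (-‖z‖ ^ 2))
        ((MeasurableEquiv.toLp 2 (Fin (d + 1) → ℝ)).symm.symm z) =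
      ∏ i, (fun i (t : ℝ) => t ^ (if i = 0 then m else 0) * exp (-t ^ 2)) i (z i) := by
    intro z
    simp only [MeasurableEquiv.symm_symm, MeasurableEquiv.toLp_apply, EuclideanSpace.norm_sq_eq,
      Finset.prod_mul_distrib]
    congr 1
    · rw [Finset.prod_eq_single 0] <;> simp +contextual
    · rw [← Real.exp_sum]; simp
  rw [integral_congr_ae (Filter.Eventually.of_forall e2)]
  rw [integral_fintype_prod_volume_eq_prod
    (f := fun (i : Fin (d + 1)) (t : ℝ) => t ^ (if i = 0 then m else 0) * exp (-t ^ 2)), Fin.prod_univ_succ]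
  simp [Gm]

theorem polar_zonal {E : Type*} [NormedAddCommGroup E] [InnerProductSpace ℝ E]
    [FiniteDimensional ℝ E] [MeasurableSpace E] [BorelSpace E] [Nontrivial E]
    (μ : Measure E) [μ.IsAddHaarMeasure] (d m : ℕ) (x : E) (hd : Module.finrank ℝ E = d + 1) :
    ∫ y : E, ⟪x, y⟫ ^ m * exp (-‖y‖ ^ 2) ∂μ =
      (∫ w, ⟪x, ((w : Metric.sphere (0 : E) 1) : E)⟫ ^ m ∂μ.toSphere) *
      ∫ t in Ioi (0 : ℝ), t ^ (d + m) * exp (-t ^ 2) := by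
  calc
    _ = ∫ y : ({(0)}ᶜ : Set E), ⟪x, y.1⟫ ^ m * exp (-‖y.1‖ ^ 2) ∂(μ.comap (↑)) := by
      rw [integral_subtype_comap (measurableSet_singleton _).compl
        fun y : E ↦ ⟪x, y⟫ ^ m * exp (-‖y‖ ^ 2), restrict_compl_singleton]
    _ = ∫ p, ⟪x, (p.1 : E)⟫ ^ m * ((p.2 : ℝ) ^ m * exp (-(p.2 : ℝ) ^ 2))
          ∂μ.toSphere.prod (.volumeIoiPow (Module.finrank ℝ E - 1)) := by
      rw [← μ.measurePreserving_homeomorphUnitSphereProd.integral_comp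
        (Homeomorph.measurableEmbedding _)]
      refine integral_congr_ae (Filter.Eventually.of_forall fun y => ?_)
      have hy : ‖(y : E)‖ ≠ 0 := by
        have := y.2
        simp only [Set.mem_compl_iff, Set.mem_singleton_iff] at this
        simpa using this
      simp only [homeomorphUnitSphereProd_apply_fst_coe, homeomorphUnitSphereProd_apply_snd_coe,
        inner_smul_right, mul_pow, inv_pow]
      field_simp
    _ = (∫ w, ⟪x, (w : E)⟫ ^ m ∂μ.toSphere) * ∫ t : Ioi (0 : ℝ), ((t : ℝ) ^ m * exp (-(t : ℝ) ^ 2))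
          ∂.volumeIoiPow (Module.finrank ℝ E - 1) :=
      integral_prod_mul (μ := μ.toSphere) (ν := .volumeIoiPow (Module.finrank ℝ E - 1))
        (fun w => ⟪x, (w : E)⟫ ^ m)
        (fun t : Ioi (0 : ℝ) => ((t : ℝ) ^ m * exp (-(t : ℝ) ^ 2)))
    _ = _ := by
      congr 1
      simp only [Measure.volumeIoiPow, ENNReal.ofReal]
      rw [integral_withDensity_eq_integral_smul,
        integral_subtype_comap measurableSet_Ioi fun a : ℝ ↦
          Real.toNNReal (a ^ (Module.finrank ℝ E - 1)) • (a ^ m * exp (-a ^ 2)),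
        setIntegral_congr_fun measurableSet_Ioi fun t ht ↦ ?_]
      · simp only [NNReal.smul_def]
        rw [Real.coe_toNNReal _ (pow_nonneg (le_of_lt ht) _)]
        simp [hd, pow_add, mul_assoc]
      · exact (measurable_subtype_coe.pow_const _).real_toNNReal

def Rm (k : ℕ) : ℝ := ∫ t in Ioi (0 : ℝ), t ^ k * exp (-t ^ 2)

theorem Rm_eq (k : ℕ) : Rm k = Gamma (((k : ℝ) + 1) / 2) / 2 := by
  have := integral_rpow_mul_exp_neg_rpow (p := 2) (q := k) (by norm_num)
    (by have : (0 : ℝ) ≤ k := Nat.cast_nonneg k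
        linarith)
  unfold Rm
  rw [div_eq_inv_mul, ← one_div, ← this]
  refine setIntegral_congr_fun measurableSet_Ioi fun t ht ↦ ?_
  simp [Real.rpow_natCast]


def Sm (d : ℕ) (x : Sph d) (m : ℕ) : ℝ := ∫ w, ip x w ^ m
        ∂(volume : Measure (EuclideanSpace ℝ (Fin (d + 1)))).toSphere

theorem Sm_Rm (d : ℕ) (x : Sph d) (m : ℕ) : Sm d x m * Rm (d + m) = Gm m * Gm 0 ^ d := by
  have h := polar_zonal (volume : Measure (EuclideanSpace ℝ (Fin (d + 1)))) d m x.1 (by simp)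
  rw [gauss_zonal d m x.1 (by simp)] at h
  exact h.symm

theorem Rm_pos (k : ℕ) : 0 < Rm k := by
  rw [Rm_eq]
  have : 0 < Gamma (((k : ℝ) + 1) / 2) := Gamma_pos_of_pos (by positivity)
  positivity

theorem Rm_rec (k : ℕ) : Rm (k + 2) = (k + 1) / 2 * Rm k := by
  rw [Rm_eq, Rm_eq]
  have := Real.Gamma_add_one (s := ((k : ℝ) + 1) / 2) (by positivity)
  rw [show (((k + 2 : ℕ) : ℝ) + 1) / 2 = ((k : ℝ) + 1) / 2 + 1 by push_cast; ring, this]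
  ring

theorem Sm_one (d : ℕ) (x : Sph d) : Sm d x 1 = 0 := by
  have h := Sm_Rm d x 1
  rw [Gm_one, zero_mul] at h
  exact (mul_eq_zero.1 h).resolve_right (Rm_pos _).ne'

theorem Sm_rec (d : ℕ) (x : Sph d) (m : ℕ) : Sm d x (m + 2) * (d + m + 1) = (m + 1) * Sm d x m := by
  have h := Sm_Rm d x (m + 2)
  have h0 := Sm_Rm d x m
  rw [Gm_rec, mul_assoc, ← h0, ← add_assoc, Rm_rec] at h
  have hp := (Rm_pos (d + m)).ne'
  push_cast at h
  have : (Sm d x (m + 2) * (d + m + 1) - (m + 1) * Sm d x m) * Rm (d + m) = 0 := by linarith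
  have := (mul_eq_zero.1 this).resolve_right hp
  linarith

def Tm (d : ℕ) (m : ℕ) : ℝ := ∫ u in Ioo (0 : ℝ) 1, (1 - 2 * u) ^ m * bw (d / 2) (d / 2) u

theorem Tm_int (d : ℕ) (hd : 1 ≤ d) (m : ℕ) :
    IntegrableOn (fun u : ℝ => (1 - 2 * u) ^ m * bw (d / 2) (d / 2) u) (Ioo (0 : ℝ) 1) := by
  have : (0 : ℝ) < d / 2 := by
    have : (1 : ℝ) ≤ d := by exact_mod_cast hd
    linarith
  exact mul_bw_integrable this this (f := fun u => (1 - 2 * u) ^ m) (by fun_prop)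

theorem Tm_one (d : ℕ) (hd : 1 ≤ d) : Tm d 1 = 0 := by
  have hp : (0 : ℝ) < d / 2 := by
    have : (1 : ℝ) ≤ d := by exact_mod_cast hd
    linarith
  have h := bw_ibp hp hp 1
  have e : ∫ u in Ioo (0 : ℝ) 1, (d / 2 : ℝ) * ((1 - 2 * u) ^ 1 * bw (d / 2) (d / 2) u) = 0 := by
    refine Eq.trans ?_ h
    congr 1; ext u; simp; ring
  rw [integral_const_mul] at e
  exact (mul_eq_zero.1 e).resolve_left hp.ne'

theorem Tm_rec (d : ℕ) (hd : 1 ≤ d) (m : ℕ) : Tm d (m + 2) * (d + m + 1) = (m + 1) * Tm d m := by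
  have hp : (0 : ℝ) < d / 2 := by
    have : (1 : ℝ) ≤ d := by exact_mod_cast hd
    linarith
  have h := bw_ibp hp hp ((1 - 2 * Polynomial.X) ^ (m + 1))
  have e : ∫ u in Ioo (0 : ℝ) 1, ((d + m + 1) / 2 : ℝ) * ((1 - 2 * u) ^ (m + 2) * bw (d / 2) (d / 2) u)
      - ((m + 1) / 2 : ℝ) * ((1 - 2 * u) ^ m * bw (d / 2) (d / 2) u) = 0 := by
    refine Eq.trans ?_ h
    congr 1; ext u
    simp [Polynomial.derivative_pow]; ring
  rw [integral_sub ((Tm_int d hd _).const_mul _) ((Tm_int d hd _).const_mul _), integral_const_mul,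
    integral_const_mul] at e
  unfold Tm
  linarith

theorem Sm_Tm (d : ℕ) (hd : 1 ≤ d) (x : Sph d) (m : ℕ) :
    Sm d x m * Tm d 0 = Tm d m * Sm d x 0 := by
  induction m using Nat.twoStepInduction with
  | zero => ring
  | one => rw [Sm_one, Tm_one d hd]; ring
  | more m h1 h2 =>
    have a := Sm_rec d x m
    have b := Tm_rec d hd m
    have hp : (d + m + 1 : ℝ) ≠ 0 := by positivity
    have : (Sm d x (m + 2) * Tm d 0 - Tm d (m + 2) * Sm d x 0) * (d + m + 1 : ℝ) = 0 := by
      linear_combination Tm d 0 * a - Sm d x 0 * b + (m + 1 : ℝ) * h1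
    have := (mul_eq_zero.1 this).resolve_right hp
    linarith

theorem sphMeasure_prob (d : ℕ) : IsProbabilityMeasure (sphMeasure d) := by
  constructor
  unfold sphMeasure
  rw [Measure.smul_apply, smul_eq_mul, ENNReal.inv_mul_cancel]
  · rw [Ne, Measure.measure_univ_eq_zero]
    exact Measure.toSphere_ne_zero (volume : Measure (EuclideanSpace ℝ (Fin (d + 1))))
  · exact measure_ne_top _ _

theorem Tm_zero (d : ℕ) (hd : 1 ≤ d) : Tm d 0 = Gamma (d / 2) ^ 2 / Gamma d := by
  have hp : (0 : ℝ) < d / 2 := by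
    have : (1 : ℝ) ≤ d := by exact_mod_cast hd
    linarith
  have := bw_integral hp hp
  unfold Tm
  simp only [pow_zero, one_mul]
  rw [this]
  rw [add_halves]; ring

theorem Tm_zero_pos (d : ℕ) (hd : 1 ≤ d) : 0 < Tm d 0 := by
  have h1 : (1 : ℝ) ≤ d := by exact_mod_cast hd
  rw [Tm_zero d hd]
  have := Gamma_pos_of_pos (show (0 : ℝ) < d / 2 by linarith)
  have := Gamma_pos_of_pos (show (0 : ℝ) < d by linarith)
  positivity

theorem ip_cont {d : ℕ} (x : Sph d) : Continuous (fun y : Sph d => ip x y) := by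
  unfold ip
  fun_prop

theorem mom_sph (d : ℕ) (hd : 1 ≤ d) (x : Sph d) (m : ℕ) :
    ∫ y, ip x y ^ m ∂sphMeasure d = Tm d m / Tm d 0 := by
  have h : ∀ m, ∫ y, ip x y ^ m ∂sphMeasure d =
      (((volume : Measure (EuclideanSpace ℝ (Fin (d + 1)))).toSphere Set.univ)⁻¹).toReal * Sm d x m := by
    intro m
    unfold sphMeasure Sm
    rw [integral_smul_measure]; rfl
  have h0 := h 0
  have := sphMeasure_prob d
  simp only [pow_zero, integral_const, probReal_univ, one_smul] at h0
  rw [h m, eq_div_iff (Tm_zero_pos d hd).ne', mul_assoc, Sm_Tm d hd]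
  linear_combination -Tm d m * h0

theorem zonal_int (d : ℕ) (hd : 1 ≤ d) (x : Sph d) (p : Polynomial ℝ) :
    ∫ y, p.eval ((1 - ip x y) / 2) ∂sphMeasure d =
      (∫ u in Ioo (0 : ℝ) 1, p.eval u * bw (d / 2) (d / 2) u) / Tm d 0 := by
  have := sphMeasure_prob d
  set q : Polynomial ℝ := p.comp (1 - 2 * Polynomial.X) with hq
  have key : ∀ q : Polynomial ℝ, ∫ y, q.eval (ip x y) ∂sphMeasure d =
      (∫ u in Ioo (0 : ℝ) 1, q.eval (1 - 2 * u) * bw (d / 2) (d / 2) u) / Tm d 0 := by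
    intro q
    simp only [Polynomial.eval_eq_sum_range, Finset.sum_mul]
    rw [integral_finsetSum, integral_finsetSum, Finset.sum_div]
    · refine Finset.sum_congr rfl fun i _ => ?_
      simp only [mul_assoc]
      rw [integral_const_mul, integral_const_mul, mom_sph d hd]
      unfold Tm
      ring
    · intro i _
      simp only [mul_assoc]
      exact (Tm_int d hd i).const_mul _
    · intro i _
      exact Continuous.integrable_of_hasCompactSupport
        (by have := ip_cont x; fun_prop) (HasCompactSupport.of_compactSpace _)
  have := key (p.comp (Polynomial.C (1 / 2) * (1 - Polynomial.X)))
  simp only [Polynomial.eval_comp, Polynomial.eval_mul, Polynomial.eval_C, Polynomial.eval_sub,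
    Polynomial.eval_one, Polynomial.eval_X] at this
  have e : ∀ u : ℝ, 1 / 2 * (1 - (1 - 2 * u)) = u := by intro u; ring
  simp only [e] at this
  rw [← this]
  congr 1; ext y; congr 1; ring

theorem omega_ratio (d : ℕ) (hd : 1 ≤ d) :
    omegaS d / omegaS (d - 1) = 2 ^ ((d : ℝ) - 1) * Tm d 0 := by
  have h1 : (1 : ℝ) ≤ d := by exact_mod_cast hd
  have g1 := Gamma_pos_of_pos (show (0 : ℝ) < d / 2 by linarith)
  have g2 := Gamma_pos_of_pos (show (0 : ℝ) < d by linarith)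
  have g3 := Gamma_pos_of_pos (show (0 : ℝ) < (d + 1) / 2 by linarith)
  have D := Real.Gamma_mul_Gamma_add_half ((d : ℝ) / 2)
  rw [show (d : ℝ) / 2 + 1 / 2 = (d + 1) / 2 by ring, show 2 * ((d : ℝ) / 2) = d by ring] at D
  rw [Tm_zero d hd]
  unfold omegaS
  rw [Nat.cast_sub hd, Nat.cast_one, show (d : ℝ) - 1 + 1 = d by ring]
  have hpi : π ^ (((d : ℝ) + 1) / 2) = π ^ ((d : ℝ) / 2) * √π := by
    rw [Real.sqrt_eq_rpow, ← Real.rpow_add Real.pi_pos]; congr 1; ring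
  have h2 : (2 : ℝ) ^ ((d : ℝ) - 1) * 2 ^ (1 - (d : ℝ)) = 1 := by
    rw [← Real.rpow_add two_pos]; simp
  rw [hpi]
  have := Real.rpow_pos_of_pos Real.pi_pos ((d : ℝ) / 2)
  field_simp
  linear_combination (-(2 : ℝ) ^ ((d : ℝ) - 1)) * D - Gamma d * √π * h2


theorem nrm_sq {α β : ℝ} (hα : -1 < α) (hβ : -1 < β) (hs : 0 < α + β + 1) (l : ℕ) :
    nrm α β l ^ 2 * (Gamma (β + l + 1) * l.factorial * Gamma (α + β + l + 1) /
        (Gamma (α + l + 1) * (α + β + 2 * l + 1))) * 2 ^ (α + β + 1) = 1 := by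
  have l0 : (0 : ℝ) ≤ l := by positivity
  have g1 := Gamma_pos_of_pos (show 0 < α + l + 1 by linarith)
  have g2 := Gamma_pos_of_pos (show 0 < β + l + 1 by linarith)
  have g3 := Gamma_pos_of_pos (show 0 < α + β + l + 1 by linarith)
  have g4 : 0 < α + β + 2 * l + 1 := by linarith
  have g5 : (0 : ℝ) < l.factorial := by exact_mod_cast l.factorial_pos
  have g6 : (0 : ℝ) < 2 ^ (α + β + 1) := Real.rpow_pos_of_pos two_pos _
  unfold nrm
  rw [show (l : ℝ) + α + β + 1 = α + β + l + 1 by ring, show (l : ℝ) + α + 1 = α + l + 1 by ring,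
    show (l : ℝ) + β + 1 = β + l + 1 by ring, show 2 * (l : ℝ) + α + β + 1 = α + β + 2 * l + 1 by ring]
  rw [mul_pow, Real.sq_sqrt (by positivity)]
  field_simp

theorem nrm_pos {α β : ℝ} (hα : -1 < α) (hβ : -1 < β) (hs : 0 < α + β + 1) (l : ℕ) :
    0 < nrm α β l := by
  have l0 : (0 : ℝ) ≤ l := by positivity
  have g1 := Gamma_pos_of_pos (show 0 < α + l + 1 by linarith)
  have g2 := Gamma_pos_of_pos (show 0 < β + l + 1 by linarith)
  have g3 := Gamma_pos_of_pos (show 0 < α + β + l + 1 by linarith)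
  have g4 : 0 < α + β + 2 * l + 1 := by linarith
  have g5 : (0 : ℝ) < l.factorial := by exact_mod_cast l.factorial_pos
  have g6 : (0 : ℝ) < 2 ^ (α + β + 1) := Real.rpow_pos_of_pos two_pos _
  unfold nrm
  rw [show (l : ℝ) + α + β + 1 = α + β + l + 1 by ring, show (l : ℝ) + α + 1 = α + l + 1 by ring,
    show (l : ℝ) + β + 1 = β + l + 1 by ring, show 2 * (l : ℝ) + α + β + 1 = α + β + 2 * l + 1 by ring]
  have := Real.sqrt_pos.2 (show 0 < (α + β + 2 * l + 1) / 2 ^ (α + β + 1) *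
    (Gamma (α + β + l + 1) * (l.factorial : ℝ) / (Gamma (α + l + 1) * Gamma (β + l + 1))) by positivity)
  positivity

theorem Yp_orth_ne {α β : ℝ} (hα : -1 < α) (hβ : -1 < β) (hs : 0 < α + β + 1) {l k : ℕ} (h : l ≠ k) :
    ∫ u in Ioo (0:ℝ) 1, (Yp α β l).eval u * (Yp α β k).eval u * bw (α+1) (β+1) u = 0 := by
  have key : ∀ {l k : ℕ}, k < l →
      ∫ u in Ioo (0:ℝ) 1, (Yp α β l).eval u * (Yp α β k).eval u * bw (α+1) (β+1) u = 0 := by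
    intro l k h
    rw [Yp_orth hα hβ hs l _ ((Yp_natDegree α β k).trans h.le),
      Polynomial.coeff_eq_zero_of_natDegree_lt ((Yp_natDegree α β k).trans_lt h), zero_mul]
  rcases lt_or_gt_of_ne h with h | h
  · refine Eq.trans ?_ (key h)
    congr 1; ext u; ring
  · exact key h

/-- the reproducing kernel as a polynomial in `u = (1-x)/2` -/
def KP (a : ℝ) (M : ℕ) : Polynomial ℝ :=
  ∑ l ∈ Finset.range M, Polynomial.C (jacobiP a a l 1 * nrm a a l) * Yp a a l

theorem KP_eval (a : ℝ) (M : ℕ) (x : ℝ) : jacobiK a a M x = (KP a M).eval ((1 - x) / 2) := by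
  unfold jacobiK KP
  rw [Polynomial.eval_finsetSum]
  refine Finset.sum_congr rfl fun l _ => ?_
  rw [jacobiP_eq a a l x]; simp; ring

theorem KP_natDegree (a : ℝ) (M : ℕ) : (KP a M).natDegree ≤ M - 1 := by
  unfold KP
  refine Polynomial.natDegree_sum_le_of_forall_le _ _ fun l hl => ?_
  refine (Polynomial.natDegree_C_mul_le _ _).trans ((Yp_natDegree a a l).trans ?_)
  have := Finset.mem_range.1 hl
  omega

theorem KP_sq {a : ℝ} (ha : -1 < a) (hs : 0 < a + a + 1) (M : ℕ) :
    (∫ u in Ioo (0:ℝ) 1, (KP a M).eval u ^ 2 * bw (a + 1) (a + 1) u) * 2 ^ (a + a + 1)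
      = jacobiK a a M 1 := by
  have e : ∀ u, (KP a M).eval u ^ 2 * bw (a + 1) (a + 1) u =
      ∑ l ∈ Finset.range M, ∑ k ∈ Finset.range M, (jacobiP a a l 1 * nrm a a l) *
        (jacobiP a a k 1 * nrm a a k) *
        ((Yp a a l).eval u * (Yp a a k).eval u * bw (a + 1) (a + 1) u) := by
    intro u
    rw [pow_two]
    unfold KP
    simp only [Polynomial.eval_finsetSum, Finset.sum_mul, Finset.mul_sum, Polynomial.eval_mul,
      Polynomial.eval_C]
    refine Finset.sum_congr rfl fun l _ => Finset.sum_congr rfl fun k _ => ?_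
    ring
  have hIntg : ∀ l k, IntegrableOn
      (fun u => (Yp a a l).eval u * (Yp a a k).eval u * bw (a + 1) (a + 1) u) (Ioo (0:ℝ) 1) := by
    intro l k
    have := poly_int (a := a + 1) (b := a + 1) (by linarith) (by linarith) (Yp a a l * Yp a a k)
    simpa using this
  simp only [e]
  rw [integral_finsetSum _ (fun l _ => integrable_finsetSum _ fun k _ => (hIntg l k).const_mul _),
    Finset.sum_mul]
  unfold jacobiK
  refine Finset.sum_congr rfl fun l hl => ?_
  rw [integral_finsetSum _ (fun k _ => (hIntg l k).const_mul _), Finset.sum_eq_single l]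
  · rw [integral_const_mul, Yp_sq ha ha hs]
    have := nrm_sq ha ha hs l
    linear_combination jacobiP a a l 1 ^ 2 * this
  · intro k _ hk
    rw [integral_const_mul, Yp_orth_ne ha ha hs hk.symm, mul_zero]
  · intro h; exact absurd hl h

theorem gamma_sum (d M : ℕ) (hd : 1 ≤ d) :
    ∑ l ∈ Finset.range M, Gamma ((l : ℝ) + d) / l.factorial =
      M * Gamma ((M : ℝ) + d) / M.factorial / d := by
  have hd0 : (0 : ℝ) < d := by exact_mod_cast hd
  induction M with
  | zero => simp
  | succ M ih =>
    rw [Finset.sum_range_succ, ih, Nat.factorial_succ]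
    have g5 : (0 : ℝ) < M.factorial := by exact_mod_cast M.factorial_pos
    have := Gamma_add_one (s := (M : ℝ) + d) (by positivity)
    push_cast
    rw [show (M : ℝ) + 1 + d = M + d + 1 by ring, this]
    have : (M : ℝ) + 1 ≠ 0 := by positivity
    field_simp

theorem gamma_pow (d M : ℕ) (hd : 1 ≤ d) :
    M * Gamma ((M : ℝ) + d) / M.factorial ≤ ((M : ℝ) + d) ^ d := by
  cases M with
  | zero => simp
  | succ m =>
    have h1 : Gamma (((m + 1 : ℕ) : ℝ) + d) = ((m + d).factorial : ℕ) := by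
      rw [← Real.Gamma_nat_eq_factorial]; congr 1; push_cast; ring
    rw [h1, ← Nat.factorial_mul_ascFactorial, Nat.factorial_succ]
    have h2 : ((m + 1).ascFactorial d : ℝ) ≤ ((m : ℝ) + d) ^ d := by
      exact_mod_cast Nat.ascFactorial_le_pow_add m d
    have h3 : ((m : ℝ) + d) ^ d ≤ (((m + 1 : ℕ) : ℝ) + d) ^ d := by
      gcongr; simp
    have g5 : (0 : ℝ) < m.factorial := by exact_mod_cast m.factorial_pos
    refine le_trans (le_of_eq ?_) (h2.trans h3)
    push_cast
    field_simp

theorem jacobiK_one_le (d M : ℕ) (hd : 3 ≤ d) :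
    2 ^ ((d : ℝ) - 1) * jacobiK ((d : ℝ) / 2 - 1) ((d : ℝ) / 2 - 1) M 1 ≤
      2 * ((M : ℝ) + d) ^ d / (d * Gamma (d / 2) ^ 2) := by
  have h3 : (3 : ℝ) ≤ d := by exact_mod_cast hd
  set a : ℝ := (d : ℝ) / 2 - 1 with ha
  have ha1 : -1 < a := by rw [ha]; linarith
  have hs : 0 < a + a + 1 := by rw [ha]; linarith
  have G := Gamma_pos_of_pos (show (0 : ℝ) < d / 2 by linarith)
  have hp2 : (0 : ℝ) < 2 ^ ((d : ℝ) - 1) := Real.rpow_pos_of_pos two_pos _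
  have term : ∀ l : ℕ, 2 ^ ((d : ℝ) - 1) * (jacobiP a a l 1 * jacobiP a a l 1) ≤
      2 / Gamma (d / 2) ^ 2 * (Gamma ((l : ℝ) + d) / l.factorial) := by
    intro l
    have l0 : (0 : ℝ) ≤ l := by positivity
    have h := nrm_sq ha1 ha1 hs l
    rw [jacobiP_eq]
    simp only [sub_self, zero_div]
    rw [Yp_eval_zero]
    have e1 : a + a + l + 1 = l + d - 1 := by rw [ha]; ring
    have e2 : a + 1 = d / 2 := by rw [ha]; ring
    have e3 : a + a + 1 = d - 1 := by rw [ha]; ring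
    have e4 : a + a + 2 * l + 1 = 2 * l + d - 1 := by rw [ha]; ring
    rw [e1, e3, e4] at h
    rw [e1, e2]
    have g1 := Gamma_pos_of_pos (show 0 < a + l + 1 by linarith)
    have g2 := Gamma_pos_of_pos (show 0 < (l : ℝ) + d - 1 by linarith)
    have g5 : (0 : ℝ) < l.factorial := by exact_mod_cast l.factorial_pos
    have g6 : (0 : ℝ) < 2 * l + d - 1 := by linarith
    have e5 : Gamma ((l : ℝ) + d) = (l + d - 1) * Gamma (l + d - 1) := by
      rw [← Gamma_add_one (by linarith)]; congr 1; ring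
    have h' : nrm a a l ^ 2 * 2 ^ ((d : ℝ) - 1) =
        (2 * l + d - 1) / (l.factorial * Gamma (l + d - 1)) := by
      rw [eq_div_iff (by positivity)]
      have h7 : Gamma (a + l + 1) * l.factorial * Gamma (l + d - 1) /
          (Gamma (a + l + 1) * (2 * l + d - 1)) =
          l.factorial * Gamma (l + d - 1) / (2 * l + d - 1) := by
        rw [mul_assoc, mul_div_mul_left _ _ g1.ne']
      rw [h7, mul_div_assoc', div_mul_eq_mul_div, div_eq_iff g6.ne', one_mul] at h
      linarith
    have e6 : 2 ^ ((d : ℝ) - 1) * (nrm a a l * (Gamma (l + d - 1) / Gamma (d / 2)) *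
        (nrm a a l * (Gamma (l + d - 1) / Gamma (d / 2)))) =
        (nrm a a l ^ 2 * 2 ^ ((d : ℝ) - 1)) * (Gamma (l + d - 1) / Gamma (d / 2)) ^ 2 := by ring
    rw [e6, h', e5]
    have e7 : (2 * l + d - 1) / (l.factorial * Gamma (l + d - 1)) *
        (Gamma (l + d - 1) / Gamma (d / 2)) ^ 2 =
        (2 * l + d - 1) * (Gamma (l + d - 1) / (Gamma (d / 2) ^ 2 * l.factorial)) := by
      field_simp
    have e8 : 2 / Gamma (d / 2) ^ 2 * ((l + d - 1) * Gamma (l + d - 1) / l.factorial) =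
      (2 * (l + d - 1)) * (Gamma ((l : ℝ) + d - 1) / (Gamma (d / 2) ^ 2 * l.factorial)) := by
      field_simp
    rw [e7, e8]
    gcongr
    linarith
  unfold jacobiK
  rw [Finset.mul_sum]
  refine (Finset.sum_le_sum fun l _ => term l).trans ?_
  rw [← Finset.mul_sum, gamma_sum d M (by omega)]
  have := gamma_pow d M (by omega)
  have hd0 : (0 : ℝ) < d := by linarith
  calc 2 / Gamma (d / 2) ^ 2 * (M * Gamma ((M : ℝ) + d) / M.factorial / d)
      ≤ 2 / Gamma (d / 2) ^ 2 * (((M : ℝ) + d) ^ d / d) := by gcongr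
    _ = _ := by field_simp


def FF (s : ℝ) (L : ℕ) : ℕ → ℝ → ℝ
  | 0, u => u ^ (2 * L) + 1
  | J + 1, u => u ^ (2 * L) + 4 ^ (-s) * FF s L J (4 * u * (1 - u))

theorem FF_sos (s : ℝ) (L : ℕ) (J : ℕ) : ∃ (m : ℕ) (f : ℕ → Polynomial ℝ),
    (∀ i, (f i).natDegree ≤ 2 ^ J * L) ∧
      ∀ u, FF s L J u = ∑ i ∈ Finset.range m, (f i).eval u ^ 2 := by
  induction J with
  | zero =>
    refine ⟨2, fun i => if i = 0 then Polynomial.X ^ L else 1, ?_, ?_⟩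
    · intro i
      simp only
      split_ifs <;> simp
    · intro u
      simp [Finset.sum_range_succ, FF]; ring
  | succ J ih =>
    obtain ⟨m, f, hf, hF⟩ := ih
    refine ⟨m + 1, fun i => match i with
      | 0 => Polynomial.X ^ L
      | i + 1 => Polynomial.C (2 ^ (-s)) * (f i).comp (4 * Polynomial.X * (1 - Polynomial.X)), ?_, ?_⟩
    · intro i
      cases i with
      | zero => simp; exact Nat.le_mul_of_pos_left _ (by positivity)
      | succ i =>
        refine (Polynomial.natDegree_C_mul_le _ _).trans ?_
        refine Polynomial.natDegree_comp_le.trans ?_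
        have : (4 * Polynomial.X * (1 - Polynomial.X) : Polynomial ℝ).natDegree ≤ 2 := by
          compute_degree
        calc _ ≤ (2 ^ J * L) * 2 := Nat.mul_le_mul (hf i) this
          _ = _ := by ring
    · intro u
      rw [Finset.sum_range_succ', FF, hF, Finset.mul_sum, add_comm]
      congr 1
      · refine Finset.sum_congr rfl fun i _ => ?_
        have : (4 : ℝ) ^ (-s) = (2 ^ (-s)) ^ 2 := by
          rw [← Real.rpow_natCast, ← Real.rpow_mul (by norm_num), mul_comm, Real.rpow_mul (by norm_num)]
          norm_num
        rw [this]
        simp [mul_pow]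
      · simp; ring

theorem w_mem {u : ℝ} (h0 : 0 ≤ u) (h1 : u ≤ 1) : 0 ≤ 4 * u * (1 - u) ∧ 4 * u * (1 - u) ≤ 1 := by
  constructor
  · have : 0 ≤ 1 - u := by linarith
    positivity
  · nlinarith [sq_nonneg (2 * u - 1)]

theorem FF_nonneg (s : ℝ) (L J : ℕ) : ∀ u : ℝ, 0 ≤ FF s L J u := by
  obtain ⟨m, f, _, hF⟩ := FF_sos s L J
  intro u
  rw [hF]; positivity

theorem FF_upper {s : ℝ} (hs : 0 < s) (L : ℕ) (hL : s < L) : ∃ A : ℝ, 0 < A ∧ ∀ J u, 0 ≤ u → u ≤ 1 →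
    FF s L J u ≤ 4 ^ (-(J * s)) + A * u ^ s := by
  have h1 : (1 : ℝ) < 2 ^ (2 * L - 2 * s) := Real.one_lt_rpow (by norm_num) (by linarith)
  have h2 : (2 : ℝ) ^ (-s) < 1 := Real.rpow_lt_one_of_one_lt_of_neg (by norm_num) (by linarith)
  obtain ⟨D, hD⟩ : ∃ D : ℝ, D = 1 / (2 ^ (2 * L - 2 * s) - 1) := ⟨_, rfl⟩
  have hD0 : 0 < D := by rw [hD]; apply one_div_pos.2; linarith
  have hD1 : D * (2 ^ (2 * L - 2 * s) - 1) = 1 := by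
    rw [hD]; exact one_div_mul_cancel (by linarith)
  obtain ⟨A, hA⟩ : ∃ A : ℝ, A = (1 + D) / (1 - 2 ^ (-s)) := ⟨_, rfl⟩
  have hA1 : A * (1 - 2 ^ (-s)) = 1 + D := by rw [hA]; exact div_mul_cancel₀ _ (by linarith)
  have hpos : (0 : ℝ) < 2 ^ (-s) := Real.rpow_pos_of_pos two_pos _
  have hA0 : 0 < A := by rw [hA]; apply div_pos <;> linarith
  have hAD : 1 + D ≤ A := by nlinarith
  have hus : ∀ u : ℝ, 0 ≤ u → u ≤ 1 → u ^ (2 * L) ≤ u ^ s := by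
    intro u h0 h1
    rcases h0.eq_or_lt with rfl | h0
    · have : L ≠ 0 := by
        rintro rfl
        simp at hL; linarith
      rw [zero_pow (by omega), Real.zero_rpow hs.ne']
    · rw [← Real.rpow_natCast]
      apply Real.rpow_le_rpow_of_exponent_ge h0 h1
      push_cast; linarith
  have key : ∀ J u, 0 ≤ u → u ≤ 1 →
    FF s L J u ≤ 4 ^ (-(J * s)) + A * u ^ s - D * u ^ (2 * L) := by
    intro J
    induction J with
    | zero =>
      intro u h0 h1
      have := hus u h0 h1
      have h3 : 0 ≤ u ^ s := Real.rpow_nonneg h0 _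
      simp [FF]
      nlinarith
    | succ J ih =>
      intro u h0 h1
      obtain ⟨w0, w1⟩ := w_mem h0 h1
      have h := ih _ w0 w1
      rw [FF]
      have p4 : (0 : ℝ) < 4 ^ (-s) := Real.rpow_pos_of_pos (by norm_num) _
      have e1 : (4 : ℝ) ^ (-s) * 4 ^ (-(J * s)) = 4 ^ (-(((J + 1 : ℕ) : ℝ) * s)) := by
        rw [← Real.rpow_add (by norm_num)]; congr 1; push_cast; ring
      have e2 : (4 : ℝ) ^ (-s) * (4 * u * (1 - u)) ^ s = u ^ s * (1 - u) ^ s := by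
        rw [Real.mul_rpow (by positivity) (by linarith), Real.mul_rpow (by norm_num) h0,
          Real.rpow_neg (by norm_num)]
        have : (4 : ℝ) ^ s ≠ 0 := (Real.rpow_pos_of_pos (by norm_num) _).ne'
        field_simp
      have h5 := mul_le_mul_of_nonneg_left h p4.le
      have h6 : 0 ≤ u ^ s := Real.rpow_nonneg h0 _
      have h5' : 4 ^ (-s) * FF s L J (4 * u * (1 - u)) ≤ 4 ^ (-s) * 4 ^ (-(J * s)) +
          A * (4 ^ (-s) * (4 * u * (1 - u)) ^ s) -
          4 ^ (-s) * (D * (4 * u * (1 - u)) ^ (2 * L)) := h5.trans_eq (by ring)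
      rw [e1, e2] at h5'
      suffices hh : u ^ (2 * L) + A * (u ^ s * (1 - u) ^ s) - 4 ^ (-s) * (D * (4 * u * (1 - u)) ^ (2 * L))
        ≤ A * u ^ s - D * u ^ (2 * L) by linarith
      rcases le_total u (1 / 2) with hu | hu
      · have a1 : (1 - u) ^ s ≤ 1 := Real.rpow_le_one (by linarith) (by linarith) hs.le
        have a2 : (2 * u) ^ (2 * L) ≤ (4 * u * (1 - u)) ^ (2 * L) := by
          apply pow_le_pow_left₀ (by linarith)
          nlinarith
        have a3 : (4 : ℝ) ^ (-s) * 2 ^ (2 * L) = 2 ^ (2 * (L : ℝ) - 2 * s) := by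
          rw [show (4 : ℝ) = 2 ^ (2 : ℝ) by norm_num, ← Real.rpow_mul (by norm_num),
            ← Real.rpow_natCast, ← Real.rpow_add (by norm_num)]
          congr 1; push_cast; ring
        rw [mul_pow] at a2
        have a4 : A * (u ^ s * (1 - u) ^ s) ≤ A * u ^ s := by
          apply mul_le_mul_of_nonneg_left _ hA0.le
          exact mul_le_of_le_one_right h6 a1
        have a5 : 4 ^ (-s) * (D * (2 ^ (2 * L) * u ^ (2 * L))) ≤
            4 ^ (-s) * (D * (4 * u * (1 - u)) ^ (2 * L)) := by gcongr
        have a6 : 4 ^ (-s) * (D * (2 ^ (2 * L) * u ^ (2 * L))) = u ^ (2 * L) + D * u ^ (2 * L) := by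
          rw [← a3] at hD1
          linear_combination u ^ (2 * L) * hD1
        linarith
      · have a1 : (1 - u) ^ s ≤ 2 ^ (-s) := by
          rw [Real.rpow_neg (by norm_num), ← Real.inv_rpow (by norm_num)]
          apply Real.rpow_le_rpow (by linarith) (by linarith) hs.le
        have a4 : A * (u ^ s * (1 - u) ^ s) ≤ A * (u ^ s * 2 ^ (-s)) := by gcongr
        have a5 : 0 ≤ 4 ^ (-s) * (D * (4 * u * (1 - u)) ^ (2 * L)) := by positivity
        have a6 := hus u h0 h1
        have a7 : A * u ^ s - A * (u ^ s * 2 ^ (-s)) = (1 + D) * u ^ s := by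
          linear_combination u ^ s * hA1
        nlinarith
  refine ⟨A, hA0, fun J u h0 h1 => (key J u h0 h1).trans ?_⟩
  have : 0 ≤ D * u ^ (2 * L) := by positivity
  linarith

theorem FF_lower {s : ℝ} (hs : 0 < s) (L : ℕ) : ∃ E : ℝ, 0 < E ∧ ∀ J u, 0 ≤ u → u ≤ 1 →
    u ^ s ≤ E * FF s L J u := by
  obtain ⟨k, hk⟩ := exists_nat_ge s
  have hk0 : (1 : ℝ) ≤ k := by
    have : (0 : ℝ) < k := hs.trans_le hk
    exact_mod_cast this
  have hbase : (1 : ℝ) ≤ (4 * k) ^ (2 * L) := one_le_pow₀ (by linarith)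
  have key : ∀ J u, 0 ≤ u → u ≤ 1 →
      u ^ s * (1 + 2 * k * u) ≤ ((1 + 2 * k) * (4 * k) ^ (2 * L)) * FF s L J u := by
    intro J
    induction J with
    | zero =>
      intro u h0 h1
      have a1 : u ^ s ≤ 1 := Real.rpow_le_one h0 h1 hs.le
      have a2 : u ^ s * (1 + 2 * k * u) ≤ 1 * (1 + 2 * k) := by
        apply mul_le_mul a1 _ (by positivity) zero_le_one
        nlinarith
      have a3 : 1 ≤ FF s L 0 u := by simp [FF]; positivity
      calc _ ≤ (1 + 2 * (k : ℝ)) * 1 := by linarith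
        _ ≤ ((1 + 2 * k) * (4 * k) ^ (2 * L)) * 1 := by
          rw [mul_one, mul_one]; exact le_mul_of_one_le_right (by positivity) hbase
        _ ≤ _ := by gcongr
    | succ J ih =>
      intro u h0 h1
      obtain ⟨w0, w1⟩ := w_mem h0 h1
      have h := ih _ w0 w1
      rw [FF]
      have p4 : (0 : ℝ) < 4 ^ (-s) := Real.rpow_pos_of_pos (by norm_num) _
      have FN := FF_nonneg s L J (4 * u * (1 - u))
      have e2 : (4 : ℝ) ^ (-s) * (4 * u * (1 - u)) ^ s = u ^ s * (1 - u) ^ s := by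
        rw [Real.mul_rpow (by positivity) (by linarith), Real.mul_rpow (by norm_num) h0,
          Real.rpow_neg (by norm_num)]
        have : (4 : ℝ) ^ s ≠ 0 := (Real.rpow_pos_of_pos (by norm_num) _).ne'
        field_simp
      have h6 : 0 ≤ u ^ s := Real.rpow_nonneg h0 _
      rcases le_total u (1 / (4 * k)) with hu | hu
      · have hu' : 4 * k * u ≤ 1 := by
          rw [le_div_iff₀ (by positivity)] at hu; linarith
        have hu2 : u ≤ 1 / 2 := by nlinarith
        have b1 : 1 - k * u ≤ (1 - u) ^ s := by
          have c1 : 1 + (k : ℝ) * (-u) ≤ (1 + (-u)) ^ k := one_add_mul_le_pow (by linarith) k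
          have c2 : (1 - u) ^ (k : ℝ) ≤ (1 - u) ^ s :=
            Real.rpow_le_rpow_of_exponent_ge (by linarith) (by linarith) hk
          rw [Real.rpow_natCast] at c2
          calc 1 - k * u = 1 + (k : ℝ) * (-u) := by ring
            _ ≤ _ := c1
            _ = (1 - u) ^ k := by ring_nf
            _ ≤ _ := c2
        have b2 : 1 + 2 * k * u ≤ (1 - u) ^ s * (1 + 2 * k * (4 * u * (1 - u))) := by
          have c3 : 1 + 2 * k * (2 * u) ≤ 1 + 2 * k * (4 * u * (1 - u)) := by
            have : 2 * u ≤ 4 * u * (1 - u) := by nlinarith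
            have := mul_le_mul_of_nonneg_left this (show (0 : ℝ) ≤ 2 * k by positivity)
            linarith
          have c4 : 0 ≤ (k : ℝ) * u := by positivity
          calc 1 + 2 * k * u ≤ (1 - k * u) * (1 + 2 * k * (2 * u)) := by nlinarith
            _ ≤ _ := mul_le_mul b1 c3 (by positivity) (Real.rpow_nonneg (by linarith) _)
        have b3 := mul_le_mul_of_nonneg_left b2 h6
        have b4 := mul_le_mul_of_nonneg_left h p4.le
        have b5 : 0 ≤ ((1 + 2 * k) * (4 * k : ℝ) ^ (2 * L)) * u ^ (2 * L) := by positivity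
        calc _ ≤ u ^ s * ((1 - u) ^ s * (1 + 2 * k * (4 * u * (1 - u)))) := b3
          _ = 4 ^ (-s) * ((4 * u * (1 - u)) ^ s * (1 + 2 * k * (4 * u * (1 - u)))) := by
            rw [← mul_assoc, ← e2]; ring
          _ ≤ _ := b4
          _ ≤ _ := by linarith
      · have b0 : 1 ≤ 4 * k * u := by
          rw [div_le_iff₀ (by positivity)] at hu; linarith
        have a1 : u ^ s ≤ 1 := Real.rpow_le_one h0 h1 hs.le
        have a2 : u ^ s * (1 + 2 * k * u) ≤ 1 * (1 + 2 * k) := by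
          apply mul_le_mul a1 _ (by positivity) zero_le_one
          nlinarith
        have a3 : 1 ≤ (4 * k * u) ^ (2 * L) := one_le_pow₀ b0
        rw [mul_pow] at a3
        calc _ ≤ (1 + 2 * (k : ℝ)) * 1 := by linarith
          _ ≤ (1 + 2 * (k : ℝ)) * ((4 * k) ^ (2 * L) * u ^ (2 * L)) := by gcongr
          _ = ((1 + 2 * (k : ℝ)) * (4 * k) ^ (2 * L)) * u ^ (2 * L) := by ring
          _ ≤ _ := by
            gcongr
            linarith [mul_nonneg p4.le FN]
  refine ⟨(1 + 2 * k) * (4 * k) ^ (2 * L), by positivity, fun J u h0 h1 => le_trans ?_ (key J u h0 h1)⟩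
  apply le_mul_of_one_le_right (Real.rpow_nonneg h0 _)
  have : (0 : ℝ) ≤ 2 * k * u := by positivity
  linarith

theorem majorant (s : ℝ) (hs : 0 ≤ s) : ∃ C : ℝ, 0 < C ∧ ∀ n : ℕ, s + 1 ≤ n →
    ∃ (m : ℕ) (f : ℕ → Polynomial ℝ), (∀ i, (f i).natDegree < 2 * n) ∧
      ∀ u : ℝ, 0 ≤ u → u ≤ 1 → u ^ s ≤ ∑ i ∈ Finset.range m, (f i).eval u ^ 2 ∧
        ∑ i ∈ Finset.range m, (f i).eval u ^ 2 ≤ C * (u ^ s + (n : ℝ) ^ (-(2 * s))) := by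
  rcases hs.eq_or_lt with rfl | hs
  · refine ⟨1, one_pos, fun n hn => ⟨1, fun _ => 1, ?_, ?_⟩⟩
    · intro i
      have : (0 : ℝ) < n := by linarith
      have : 0 < n := by exact_mod_cast this
      simpa using this
    · intro u _ _
      simp
  obtain ⟨L, hLdef⟩ : ∃ L : ℕ, L = ⌊s⌋₊ + 1 := ⟨_, rfl⟩
  have hL : s < L := by rw [hLdef]; exact_mod_cast Nat.lt_floor_add_one s
  have hL2 : (L : ℝ) ≤ s + 1 := by
    rw [hLdef]; push_cast; linarith [Nat.floor_le hs.le]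
  have hL0 : 0 < L := by omega
  have hL0r : (0 : ℝ) < L := by exact_mod_cast hL0
  obtain ⟨A, hA, hup⟩ := FF_upper hs L hL
  obtain ⟨E, hE, hlo⟩ := FF_lower hs L
  have hpL : (0 : ℝ) < (2 * L) ^ (2 * s) := by positivity
  refine ⟨E * (A + (2 * L) ^ (2 * s)), by positivity, fun n hn => ?_⟩
  have hLn : L ≤ n := by exact_mod_cast hL2.trans hn
  have hn0 : (0 : ℝ) < n := by linarith
  obtain ⟨J, hJ⟩ : ∃ J : ℕ, J = Nat.log 2 (n / L) := ⟨_, rfl⟩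
  have hq : n / L ≠ 0 := by
    have := Nat.div_pos hLn hL0
    omega
  have hJ1 : 2 ^ J * L ≤ n := by
    have := Nat.pow_log_le_self 2 hq
    rw [← hJ] at this
    exact (Nat.mul_le_mul_right L this).trans (Nat.div_mul_le_self n L)
  have hJ2 : n < 2 ^ (J + 1) * L := by
    have := Nat.lt_pow_succ_log_self (b := 2) (by norm_num) (n / L)
    rw [← hJ] at this
    exact (Nat.div_lt_iff_lt_mul hL0).1 this
  have hJ3 : (4 : ℝ) ^ (-(J * s)) ≤ (2 * L) ^ (2 * s) * (n : ℝ) ^ (-(2 * s)) := by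
    have h : (n : ℝ) ≤ 2 ^ (J : ℝ) * (2 * L) := by
      rw [Real.rpow_natCast]
      have : (n : ℝ) < 2 ^ (J + 1) * L := by exact_mod_cast hJ2
      rw [pow_succ] at this; linarith
    have h2 := Real.rpow_le_rpow hn0.le h (show 0 ≤ 2 * s by linarith)
    rw [Real.mul_rpow (by positivity) (by positivity), ← Real.rpow_mul (by norm_num)] at h2
    rw [Real.rpow_neg hn0.le, Real.rpow_neg (by norm_num), ← div_eq_mul_inv,
      show (4 : ℝ) = 2 ^ (2 : ℝ) by norm_num, ← Real.rpow_mul (by norm_num),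
      le_div_iff₀ (by positivity), inv_mul_le_iff₀ (by positivity)]
    rw [show 2 * (J * s) = J * (2 * s) by ring]
    exact h2
  obtain ⟨m, f, hf, hF⟩ := FF_sos s L J
  refine ⟨m, fun i => Polynomial.C (√E) * f i, ?_, ?_⟩
  · intro i
    refine (Polynomial.natDegree_C_mul_le _ _).trans_lt ((hf i).trans_lt ?_)
    omega
  · intro u h0 h1
    have e : ∑ i ∈ Finset.range m, (Polynomial.C (√E) * f i).eval u ^ 2 = E * FF s L J u := by
      rw [hF, Finset.mul_sum]
      refine Finset.sum_congr rfl fun i _ => ?_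
      simp [mul_pow, Real.sq_sqrt hE.le]
    rw [e]
    refine ⟨hlo J u h0 h1, ?_⟩
    have h2 := hup J u h0 h1
    have h6 : 0 ≤ u ^ s := Real.rpow_nonneg h0 _
    have h7 : 0 ≤ (n : ℝ) ^ (-(2 * s)) := Real.rpow_nonneg hn0.le _
    rw [mul_assoc]
    gcongr
    have : 0 ≤ A * (n : ℝ) ^ (-(2 * s)) := by positivity
    have : 0 ≤ (2 * (L : ℝ)) ^ (2 * s) * u ^ s := by positivity
    nlinarith


theorem gamma_lower {x a : ℝ} (hx : 0 < x) (ha : 1 < a) : x ^ a * Gamma x ≤ Gamma (x + a) := by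
  have a0 : 0 < a := by linarith
  have g1 := Gamma_pos_of_pos hx
  have g2 := Gamma_pos_of_pos (show 0 < x + a by linarith)
  have h := Real.Gamma_mul_add_mul_le_rpow_Gamma_mul_rpow_Gamma (s := x) (t := x + a) (a := 1 - 1 / a)
    (b := 1 / a) hx (by linarith) (by
      have : 1 / a < 1 := by rw [div_lt_one a0]; exact ha
      linarith) (by positivity) (by ring)
  rw [show (1 - 1 / a) * x + 1 / a * (x + a) = x + 1 by field_simp; ring, Gamma_add_one hx.ne'] at h
  have h2 := Real.rpow_le_rpow (by positivity) h a0.le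
  rw [Real.mul_rpow hx.le g1.le, Real.mul_rpow (by positivity) (by positivity), ← Real.rpow_mul g1.le,
    ← Real.rpow_mul g2.le, one_div_mul_cancel a0.ne', Real.rpow_one,
    show (1 - 1 / a) * a = a - 1 by field_simp, Real.rpow_sub_one g1.ne'] at h2
  have p := Real.rpow_pos_of_pos g1 a
  rw [div_mul_eq_mul_div, le_div_iff₀ g1, mul_assoc, mul_left_comm] at h2
  exact le_of_mul_le_mul_left h2 p

theorem gamma_upper_nat {x : ℝ} (hx : 0 < x) (k : ℕ) : Gamma (x + k) ≤ (x + k) ^ k * Gamma x := by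
  have g1 := Gamma_pos_of_pos hx
  induction k with
  | zero => simp
  | succ k ih =>
    have : x + ((k + 1 : ℕ) : ℝ) = (x + k) + 1 := by push_cast; ring
    rw [this, Gamma_add_one (by positivity), pow_succ]
    have h1 : (x + k) ^ k ≤ (x + k + 1) ^ k :=
      pow_le_pow_left₀ (by positivity) (by linarith) k
    calc (x + k) * Gamma (x + k) ≤ (x + k + 1) * ((x + k) ^ k * Gamma x) :=
          mul_le_mul (by linarith) ih (Gamma_pos_of_pos (by positivity)).le (by positivity)
      _ ≤ (x + k + 1) * ((x + k + 1) ^ k * Gamma x) := by gcongr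
      _ = _ := by ring

theorem gamma_upper {x r : ℝ} (hx : 0 < x) (hr : 0 ≤ r) (k : ℕ) (hk : r < k) :
    Gamma (x + r) ≤ (x + k) ^ r * Gamma x := by
  rcases hr.eq_or_lt with rfl | hr
  · simp
  have g1 := Gamma_pos_of_pos hx
  have k0 : (0 : ℝ) < k := hr.trans hk
  have g2 := Gamma_pos_of_pos (show 0 < x + k by linarith)
  have h := Real.Gamma_mul_add_mul_le_rpow_Gamma_mul_rpow_Gamma (s := x) (t := x + k) (a := 1 - r / k)
    (b := r / k) hx (by linarith) (by
      have : r / k < 1 := by rw [div_lt_one k0]; exact hk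
      linarith) (by positivity) (by ring)
  rw [show (1 - r / k) * x + r / k * (x + k) = x + r by field_simp; ring] at h
  have h2 := Real.rpow_le_rpow g2.le (gamma_upper_nat hx k) (show 0 ≤ r / k by positivity)
  rw [Real.mul_rpow (by positivity) g1.le, ← Real.rpow_natCast, ← Real.rpow_mul (by positivity),
    mul_div_cancel₀ _ k0.ne'] at h2
  calc _ ≤ _ := h
    _ ≤ Gamma x ^ (1 - r / k) * ((x + k) ^ r * Gamma x ^ (r / k)) := by gcongr
    _ = (x + k) ^ r * (Gamma x ^ (1 - r / k) * Gamma x ^ (r / k)) := by ring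
    _ = _ := by rw [← Real.rpow_add g1]; simp

/-- consequences of the size hypothesis -/
theorem n_ge {d n : ℕ} {r : ℝ} (hd : 3 ≤ d) (hr : 0 ≤ r) (h : ((d : ℝ) + r + 1) ^ 2 ≤ (n : ℝ) * d) :
    (d : ℝ) + 2 * r + 2 ≤ n := by
  have h3 : (3 : ℝ) ≤ d := by exact_mod_cast hd
  have : ((d : ℝ) + 2 * r + 2) * d ≤ n * d := by nlinarith [sq_nonneg (r + 1)]
  exact le_of_mul_le_mul_right this (by linarith)

theorem moment_bound (r : ℝ) (hr : 0 ≤ r) : ∃ G : ℝ, 0 < G ∧ ∀ (d n : ℕ) (b : ℝ), 3 ≤ d →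
    (d : ℝ) + 2 * r + 2 ≤ n → 0 ≤ b → b ≤ r →
    ∫ u in Ioo (0:ℝ) 1, (Yp (d / 2 + r) (d / 2 - 2) (d * n)).eval u ^ 2 *
        bw (d / 2 + r - b) (d / 2 - 2 + 1) u ≤
      G * (n : ℝ) ^ (2 * b) *
        ∫ u in Ioo (0:ℝ) 1, (Yp (d / 2 + r) (d / 2 - 2) (d * n)).eval u ^ 2 *
          bw (d / 2 + r) (d / 2 - 2 + 1) u := by
  obtain ⟨K, hK⟩ : ∃ K : ℕ, K = ⌈r⌉₊ := ⟨_, rfl⟩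
  have hK1 : r ≤ K := by rw [hK]; exact Nat.le_ceil r
  have hK2 : (K : ℝ) < r + 1 := by rw [hK]; exact Nat.ceil_lt_add_one hr
  refine ⟨1 + 192 ^ K, by positivity, fun d n b hd hn hb hbr => ?_⟩
  have h3 : (3 : ℝ) ≤ d := by exact_mod_cast hd
  have n0 : (0 : ℝ) < n := by linarith
  refine moment_interp (by linarith) (d * n) K (by linarith) hb (hbr.trans hK1) n0 ?_
  have hN : 3 * (n : ℝ) ≤ d * n := by gcongr
  have hdn : (d : ℝ) ≤ n := by linarith
  refine (hardy_iter (Λ := 4 * ((d : ℝ) * n) ^ 2) (δ := (d : ℝ) ^ 2 / 48) (by linarith) (by linarith)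
    (by linarith) (d * n) K ?_ (by positivity) ?_).trans_eq ?_
  · push_cast
    set N : ℝ := (d : ℝ) * n
    have c1 : (d : ℝ) / 2 + r ≤ N := by linarith
    have c2 : (d : ℝ) / 2 - 2 + 1 ≤ N := by linarith
    have N0 : 0 ≤ N := by linarith
    have c3 : ((d : ℝ) / 2 + r) ^ 2 ≤ N ^ 2 := pow_le_pow_left₀ (by linarith) c1 2
    have c4 : ((d : ℝ) / 2 + r) * (d / 2 - 2 + 1) ≤ N * N :=
      mul_le_mul c1 c2 (by linarith) N0
    have c5 : N * (N + (d / 2 + r) + (d / 2 - 2) + 1) ≤ N * (3 * N) := by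
      apply mul_le_mul_of_nonneg_left _ N0
      linarith
    nlinarith
  · intro j hj1 hj2
    have hjK : (j : ℝ) ≤ K := by exact_mod_cast hj2
    have j0 : (0 : ℝ) ≤ j := by positivity
    refine ⟨by linarith, ?_⟩
    have c1 : (d : ℝ) / 6 ≤ d / 2 + r - j := by linarith
    have c2 : (d : ℝ) / 2 ≤ d / 2 + r + j := by linarith
    have := mul_le_mul c1 c2 (by linarith) (by linarith)
    nlinarith
  · congr 1
    have : 4 * ((d : ℝ) * n) ^ 2 / (d ^ 2 / 48) = 192 * (n : ℝ) ^ 2 := by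
      field_simp; norm_num
    rw [this, mul_pow, Real.rpow_mul n0.le, Real.rpow_natCast]
    norm_num

theorem ratio_bound (r : ℝ) (hr : 0 ≤ r) : ∃ C : ℝ, 0 < C ∧ ∀ (d n : ℕ), 3 ≤ d →
    (d : ℝ) + 2 * r + 2 ≤ n →
    (2 * (((d + 2) * n : ℕ) + d : ℝ) ^ d / (d * Gamma (d / 2) ^ 2)) *
    ((∫ u in Ioo (0:ℝ) 1, (Yp (d / 2 + r) (d / 2 - 2) (d * n)).eval u ^ 2 *
          bw (d / 2 + r) (d / 2 - 2 + 1) u) / (Yp (d / 2 + r) (d / 2 - 2) (d * n)).eval 0 ^ 2)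
      ≤ C * (n : ℝ) ^ (-(2 * r)) := by
  obtain ⟨k, hk⟩ := exists_nat_gt r
  refine ⟨2 * exp 3 * ((1 + r) * ((k + 1 : ℝ) ^ r) ^ 2), by positivity, fun d n hd hn => ?_⟩
  have h3 : (3 : ℝ) ≤ d := by exact_mod_cast hd
  have d0 : (0 : ℝ) < d := by linarith
  have n0 : (0 : ℝ) < n := by linarith
  have k0 : (0 : ℝ) ≤ k := by positivity
  obtain ⟨N, hNd⟩ : ∃ N : ℕ, N = d * n := ⟨_, rfl⟩
  have hNr : (N : ℝ) = d * n := by rw [hNd]; push_cast; ring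
  have N0 : (0 : ℝ) < N := by rw [hNr]; positivity
  rw [← hNd]
  obtain ⟨α, hα⟩ : ∃ α : ℝ, α = d / 2 + r := ⟨_, rfl⟩
  obtain ⟨β, hβ⟩ : ∃ β : ℝ, β = (d : ℝ) / 2 - 2 := ⟨_, rfl⟩
  rw [← hα, ← hβ]
  have α1 : 1 < α := by linarith
  have β1 : 0 < β + 1 := by linarith
  rw [Yp_inv_moment (by linarith) (by linarith) (by linarith), Yp_eval_zero]
  have gα := Gamma_pos_of_pos (show 0 < α by linarith)
  have gα1 : Gamma (α + 1) = α * Gamma α := Gamma_add_one (by linarith)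
  have g1 := Gamma_pos_of_pos (show 0 < α + N + 1 by linarith)
  have g2 := Gamma_pos_of_pos (show 0 < α + β + N + 1 by linarith)
  have g3 := Gamma_pos_of_pos (show 0 < β + N + 1 by linarith)
  have g5 : (0 : ℝ) < N.factorial := by exact_mod_cast N.factorial_pos
  have gd := Gamma_pos_of_pos (show (0 : ℝ) < d / 2 by linarith)
  have b1 : (N : ℝ) ^ α * Gamma (β + N + 1) ≤ Gamma (α + β + N + 1) := by
    have h := gamma_lower (show 0 < β + N + 1 by linarith) α1
    rw [show β + N + 1 + α = α + β + N + 1 by ring] at h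
    refine le_trans ?_ h
    gcongr
    linarith
  have b2 : (N : ℝ) ^ α * N.factorial ≤ Gamma (α + N + 1) := by
    have h := gamma_lower (show (0 : ℝ) < N + 1 by linarith) α1
    rw [show (N : ℝ) + 1 + α = α + N + 1 by ring, Real.Gamma_nat_eq_factorial] at h
    refine le_trans ?_ h
    gcongr
    linarith
  have b3 : Gamma α ≤ (d : ℝ) ^ r * (k + 1) ^ r * Gamma (d / 2) := by
    rw [hα, ← Real.mul_rpow (by positivity) (by positivity)]
    refine (gamma_upper (by positivity) hr k hk).trans ?_
    gcongr
    nlinarith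
  have b4 : α ≤ (1 + r) * d := by nlinarith
  have PN : (0 : ℝ) < (N : ℝ) ^ α := Real.rpow_pos_of_pos N0 _
  have e1 : Gamma (α + β + N + 1) / Gamma (α + 1) *
      (Gamma (β + N + 1) * N.factorial * Gamma α / Gamma (α + N + 1)) /
      (Gamma (α + β + N + 1) / Gamma (α + 1)) ^ 2 =
      (Gamma (β + N + 1) / Gamma (α + β + N + 1)) * (N.factorial / Gamma (α + N + 1)) *
        (α * Gamma α ^ 2) := by
    rw [gα1]
    have : α ≠ 0 := by linarith
    field_simp
  rw [e1]
  have c1 : Gamma (β + N + 1) / Gamma (α + β + N + 1) ≤ 1 / (N : ℝ) ^ α := by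
    rw [div_le_div_iff₀ g2 PN]; linarith
  have c2 : N.factorial / Gamma (α + N + 1) ≤ 1 / (N : ℝ) ^ α := by
    rw [div_le_div_iff₀ g1 PN]; linarith
  have c3 : α * Gamma α ^ 2 ≤ ((1 + r) * d) * ((d : ℝ) ^ r * (k + 1) ^ r * Gamma (d / 2)) ^ 2 := by
    gcongr
  have c4 : (((d + 2) * n : ℕ) + d : ℝ) ^ d ≤ exp 3 * (N : ℝ) ^ d := by
    have : (((d + 2) * n : ℕ) + d : ℝ) ≤ exp (3 / d) * N := by
      have e := Real.add_one_le_exp (3 / (d : ℝ))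
      calc (((d + 2) * n : ℕ) + d : ℝ) ≤ (3 / (d : ℝ) + 1) * N := by
            rw [hNr]; push_cast
            have : (3 / (d : ℝ) + 1) * (d * n) = 3 * n + d * n := by field_simp
            rw [this]; nlinarith
        _ ≤ _ := by gcongr
    calc _ ≤ (exp (3 / d) * N) ^ d := by gcongr
      _ = _ := by
        rw [mul_pow, ← Real.exp_nat_mul]
        congr 2; field_simp
  have NN : (N : ℝ) ^ d * (N : ℝ) ^ (2 * r) = ((N : ℝ) ^ α) ^ 2 := by
    rw [← Real.rpow_natCast, ← Real.rpow_natCast, ← Real.rpow_mul N0.le, ← Real.rpow_add N0]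
    congr 1; rw [hα]; push_cast; ring
  have Nr : (N : ℝ) ^ (2 * r) = ((d : ℝ) ^ r) ^ 2 * (n : ℝ) ^ (2 * r) := by
    rw [hNr, Real.mul_rpow d0.le n0.le, ← Real.rpow_natCast, ← Real.rpow_mul d0.le]
    congr 2; push_cast; ring
  have pn : (0 : ℝ) < (n : ℝ) ^ (2 * r) := Real.rpow_pos_of_pos n0 _
  have pd : (0 : ℝ) < (d : ℝ) ^ r := Real.rpow_pos_of_pos d0 _
  calc _ ≤ 2 * (exp 3 * (N : ℝ) ^ d) / (d * Gamma (d / 2) ^ 2) *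
        ((1 / (N : ℝ) ^ α) * (1 / (N : ℝ) ^ α) *
          (((1 + r) * d) * ((d : ℝ) ^ r * (k + 1) ^ r * Gamma (d / 2)) ^ 2)) := by gcongr
    _ = 2 * exp 3 * ((1 + r) * ((k + 1 : ℝ) ^ r) ^ 2) *
        ((N : ℝ) ^ d * ((d : ℝ) ^ r) ^ 2 / ((N : ℝ) ^ α) ^ 2) := by field_simp
    _ = _ := by
      congr 1
      rw [← NN, Nr, Real.rpow_neg n0.le]
      field_simp


theorem zonal_sphPoly {d : ℕ} (x : Sph d) (p : Polynomial ℝ) {M : ℕ} (hp : p.natDegree < M) :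
    IsSphPoly d (M : ℝ) (fun y => p.eval ((1 - ip x y) / 2)) := by
  set q : MvPolynomial (Fin (d + 1)) ℝ := MvPolynomial.C (1 / 2) *
    (1 - ∑ i, MvPolynomial.C ((x : EuclideanSpace ℝ (Fin (d + 1))) i) * MvPolynomial.X i) with hq
  have hqd : q.totalDegree ≤ 1 := by
    rw [hq]
    refine (MvPolynomial.totalDegree_mul _ _).trans ?_
    rw [MvPolynomial.totalDegree_C, zero_add]
    refine (MvPolynomial.totalDegree_sub _ _).trans (max_le (by simp) ?_)
    refine MvPolynomial.totalDegree_finsetSum_le fun i _ => ?_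
    refine (MvPolynomial.totalDegree_mul _ _).trans ?_
    simp
  refine ⟨∑ j ∈ Finset.range (p.natDegree + 1), MvPolynomial.C (p.coeff j) * q ^ j, ?_, ?_⟩
  · have : (∑ j ∈ Finset.range (p.natDegree + 1), MvPolynomial.C (p.coeff j) * q ^ j).totalDegree
        ≤ p.natDegree := by
      refine MvPolynomial.totalDegree_finsetSum_le fun j hj => ?_
      refine (MvPolynomial.totalDegree_mul _ _).trans ?_
      rw [MvPolynomial.totalDegree_C, zero_add]
      refine (MvPolynomial.totalDegree_pow _ _).trans ?_
      have := Finset.mem_range.1 hj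
      calc j * q.totalDegree ≤ j * 1 := Nat.mul_le_mul_left _ hqd
        _ ≤ _ := by omega
    exact_mod_cast this.trans_lt hp
  · intro y
    have e : MvPolynomial.eval (fun i => (y : EuclideanSpace ℝ (Fin (d + 1))) i) q =
        (1 - ip x y) / 2 := by
      simp only [hq, ip, PiLp.inner_apply, map_mul, map_sub, map_sum, MvPolynomial.eval_C,
        MvPolynomial.eval_X, map_one, RCLike.inner_apply, conj_trivial]
      have e2 : ∀ i, (x : EuclideanSpace ℝ (Fin (d + 1))) i * (y : EuclideanSpace ℝ (Fin (d + 1))) i =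
        (y : EuclideanSpace ℝ (Fin (d + 1))) i * (x : EuclideanSpace ℝ (Fin (d + 1))) i :=
        fun i => mul_comm _ _
      simp only [e2]
      ring
    simp only
    rw [Polynomial.eval_eq_sum_range, map_sum]
    refine Finset.sum_congr rfl fun j _ => ?_
    rw [map_mul, map_pow, e, MvPolynomial.eval_C]

theorem mz_zonal {d n : ℕ} (hd : 1 ≤ d) {ν : SignedMeasure (Sph d)} {c : ℝ}
    (h : IsMZ d ((2 * (d + 2) * n : ℕ) : ℝ) ν c) (x : Sph d) (p : Polynomial ℝ)
    (hp : p.natDegree < (d + 2) * n) :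
    ∫ y, p.eval ((1 - ip x y) / 2) ^ 2 ∂ν.totalVariation ≤
      c * ((∫ u in Ioo (0 : ℝ) 1, p.eval u ^ 2 * bw (d / 2) (d / 2) u) / Tm d 0) := by
  have h1 := zonal_sphPoly x p hp
  have e : (((2 * (d + 2) * n : ℕ) : ℝ)) / 2 = (((d + 2) * n : ℕ) : ℝ) := by push_cast; ring
  have h2 := h _ (by rw [e]; exact h1)
  have h3 := zonal_int d hd x (p ^ 2)
  simp only [Polynomial.eval_pow] at h3
  rw [h3] at h2
  exact h2

theorem ip_mem {d : ℕ} (x y : Sph d) : 0 ≤ (1 - ip x y) / 2 ∧ (1 - ip x y) / 2 ≤ 1 := by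
  have h := abs_real_inner_le_norm (x : EuclideanSpace ℝ (Fin (d + 1))) y
  have hx : ‖(x : EuclideanSpace ℝ (Fin (d + 1)))‖ = 1 := by simp
  have hy : ‖(y : EuclideanSpace ℝ (Fin (d + 1)))‖ = 1 := by simp
  rw [hx, hy, mul_one] at h
  have := abs_le.1 h
  unfold ip
  constructor <;> linarith [this.1, this.2]

theorem cs_bound {X : Type*} [TopologicalSpace X] [CompactSpace X] [MeasurableSpace X] [BorelSpace X]
    [SecondCountableTopology X]
    (τ : Measure X) [IsFiniteMeasure τ] {f g : X → ℝ} (hf : Continuous f) (hg : Continuous g)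
    {a b R : ℝ} (ha : ∫ y, f y ^ 2 ∂τ ≤ a) (hb : ∫ y, g y ^ 2 ∂τ ≤ b) (hR : 0 ≤ R) (hab : a * b ≤ R ^ 2) :
    ∫ y, |f y| * |g y| ∂τ ≤ R := by
  have mf : ∀ {f : X → ℝ}, Continuous f → MemLp (fun y => |f y|) (ENNReal.ofReal 2) τ := by
    intro f hf
    exact hf.abs.memLp_of_hasCompactSupport (HasCompactSupport.of_compactSpace _)
  have H := integral_mul_le_Lp_mul_Lq_of_nonneg (μ := τ) (f := fun y => |f y|) (g := fun y => |g y|)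
    Real.HolderConjugate.two_two (Filter.Eventually.of_forall fun _ => abs_nonneg _)
    (Filter.Eventually.of_forall fun _ => abs_nonneg _) (mf hf) (mf hg)
  simp only [Real.rpow_two, sq_abs, ← Real.sqrt_eq_rpow] at H
  refine H.trans ?_
  have i1 : 0 ≤ ∫ y, f y ^ 2 ∂τ := integral_nonneg fun _ => sq_nonneg _
  have i2 : 0 ≤ ∫ y, g y ^ 2 ∂τ := integral_nonneg fun _ => sq_nonneg _
  rw [← Real.sqrt_mul i1]
  apply Real.sqrt_le_iff.2 ⟨hR, le_trans (mul_le_mul ha hb i2 (i1.trans ha)) hab⟩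


theorem K_part {d n : ℕ} (hd : 3 ≤ d) (hn : 0 < n) {ν : SignedMeasure (Sph d)} {c : ℝ}
    (h : IsMZ d ((2 * (d + 2) * n : ℕ) : ℝ) ν c) (x : Sph d) :
    ∫ y, sphK d ((d + 2) * n) (ip x y) ^ 2 ∂ν.totalVariation ≤
      c * (Tm d 0 * (2 ^ ((d : ℝ) - 1) *
        jacobiK ((d : ℝ) / 2 - 1) ((d : ℝ) / 2 - 1) ((d + 2) * n) 1)) := by
  have h3 : (3 : ℝ) ≤ d := by exact_mod_cast hd
  have T0 := Tm_zero_pos d (by omega)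
  obtain ⟨a, ha⟩ : ∃ a : ℝ, a = (d : ℝ) / 2 - 1 := ⟨_, rfl⟩
  obtain ⟨M, hM⟩ : ∃ M : ℕ, M = (d + 2) * n := ⟨_, rfl⟩
  obtain ⟨w, hw⟩ : ∃ w : ℝ, w = omegaS d / omegaS (d - 1) := ⟨_, rfl⟩
  have M0 : 0 < M := by rw [hM]; positivity
  have key := mz_zonal (by omega) h x (Polynomial.C w * KP a M) (by
    refine (Polynomial.natDegree_C_mul_le _ _).trans_lt ((KP_natDegree a M).trans_lt ?_)
    omega)
  have e1 : ∀ y, (Polynomial.C w * KP a M).eval ((1 - ip x y) / 2) = sphK d ((d + 2) * n) (ip x y) := by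
    intro y
    rw [sphK, ← ha, ← hM, ← hw, KP_eval]; simp
  simp only [e1] at key
  refine key.trans_eq ?_
  congr 1
  have hK := KP_sq (a := a) (by rw [ha]; linarith) (by rw [ha]; linarith) M
  rw [← ha, ← hM, ← hK, show a + 1 = (d : ℝ) / 2 by rw [ha]; ring,
    show a + a + 1 = (d : ℝ) - 1 by rw [ha]; ring]
  simp only [Polynomial.eval_mul, Polynomial.eval_C, mul_pow, mul_assoc]
  rw [integral_const_mul, hw, omega_ratio d (by omega)]
  field_simp

theorem g_part (r s : ℝ) (hs : 0 ≤ s) (hsr : s ≤ r) : ∃ C : ℝ, 0 < C ∧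
    ∀ (d n : ℕ) (ν : SignedMeasure (Sph d)) (c : ℝ), 3 ≤ d → (d : ℝ) + 2 * r + 2 ≤ n → 0 ≤ c →
      IsMZ d ((2 * (d + 2) * n : ℕ) : ℝ) ν c → ∀ x : Sph d,
      ∫ y, ((Yp (d / 2 + r) (d / 2 - 2) (d * n)).eval ((1 - ip x y) / 2) *
          (1 - ip x y) ^ (s / 2)) ^ 2 ∂ν.totalVariation ≤
        c * (C * (n : ℝ) ^ (2 * (r - s)) / Tm d 0 *
          ∫ u in Ioo (0:ℝ) 1, (Yp (d / 2 + r) (d / 2 - 2) (d * n)).eval u ^ 2 *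
            bw (d / 2 + r) (d / 2 - 2 + 1) u) := by
  have hr : 0 ≤ r := hs.trans hsr
  obtain ⟨C₁, hC₁, hmaj⟩ := majorant s hs
  obtain ⟨G, hG, hmom⟩ := moment_bound r hr
  refine ⟨2 ^ s * (C₁ * (2 * G)), by positivity, fun d n ν c hd hn hc h x => ?_⟩
  have h3 : (3 : ℝ) ≤ d := by exact_mod_cast hd
  have n0 : (0 : ℝ) < n := by linarith
  have T0 := Tm_zero_pos d (by omega)
  obtain ⟨m, f, hf, hF⟩ := hmaj n (by linarith)
  have m1 := hmom d n (r - s) hd hn (by linarith) (by linarith)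
  have m2 := hmom d n r hd hn hr le_rfl
  rw [show (d : ℝ) / 2 + r - (r - s) = d / 2 + s by ring] at m1
  rw [show (d : ℝ) / 2 + r - r = d / 2 by ring] at m2
  set Y := Yp ((d : ℝ) / 2 + r) (d / 2 - 2) (d * n) with hY
  have hYd : Y.natDegree ≤ d * n := Yp_natDegree _ _ _
  set I₁ := ∫ u in Ioo (0:ℝ) 1, Y.eval u ^ 2 * bw (d / 2 + r) (d / 2 - 2 + 1) u with hI
  have : IsFiniteMeasure ν.totalVariation := by
    unfold SignedMeasure.totalVariation; infer_instance
  have cint : ∀ {g : Sph d → ℝ}, Continuous g → Integrable g ν.totalVariation := fun hg =>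
    hg.integrable_of_hasCompactSupport (HasCompactSupport.of_compactSpace _)
  have hip := ip_cont x
  have ci : ∀ i, Continuous fun y => (Y * f i).eval ((1 - ip x y) / 2) ^ 2 := by
    intro i
    have := (Y * f i).continuous
    fun_prop
  -- step 1: pointwise majorant
  have s1 : ∫ y, (Y.eval ((1 - ip x y) / 2) * (1 - ip x y) ^ (s / 2)) ^ 2 ∂ν.totalVariation ≤
      ∫ y, 2 ^ s * ∑ i ∈ Finset.range m, (Y * f i).eval ((1 - ip x y) / 2) ^ 2 ∂ν.totalVariation := by
    refine integral_mono (cint ?_) (cint ?_) fun y => ?_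
    · have h1 : Continuous fun t : ℝ => t ^ (s / 2) := Real.continuous_rpow_const (by linarith)
      have h2 := Y.continuous
      fun_prop
    · exact continuous_const.mul (continuous_finsetSum _ fun i _ => ci i)
    · obtain ⟨u0, u1⟩ := ip_mem x y
      set u := (1 - ip x y) / 2 with hu
      have e : 1 - ip x y = 2 * u := by rw [hu]; ring
      simp only
      rw [e, mul_pow, ← Real.rpow_mul_natCast (by linarith)]
      rw [show s / 2 * ((2 : ℕ) : ℝ) = s by push_cast; ring, Real.mul_rpow (by norm_num) u0]
      simp only [Polynomial.eval_mul, mul_pow]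
      rw [← Finset.mul_sum]
      have := (hF u u0 u1).1
      calc Y.eval u ^ 2 * (2 ^ s * u ^ s) = 2 ^ s * (Y.eval u ^ 2 * u ^ s) := by ring
        _ ≤ _ := by gcongr
  -- step 2: MZ inequality
  have s2 : ∀ i, ∫ y, (Y * f i).eval ((1 - ip x y) / 2) ^ 2 ∂ν.totalVariation ≤
      c * ((∫ u in Ioo (0 : ℝ) 1, (Y * f i).eval u ^ 2 * bw (d / 2) (d / 2) u) / Tm d 0) := by
    intro i
    apply mz_zonal (by omega) h x
    refine Polynomial.natDegree_mul_le.trans_lt ?_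
    have := hf i
    calc _ < d * n + 2 * n := by omega
      _ = _ := by ring
  have pint : ∀ p : Polynomial ℝ, IntegrableOn (fun u => p.eval u ^ 2 * bw (d / 2) (d / 2) u) (Ioo 0 1) :=
    fun p => mul_bw_integrable (by linarith) (by linarith) (p.continuous.pow 2)
  have pint2 : ∀ b : ℝ, 0 ≤ b → IntegrableOn
      (fun u => Y.eval u ^ 2 * bw (d / 2 + b) (d / 2 - 2 + 1) u) (Ioo 0 1) :=
    fun b hb => mul_bw_integrable (by linarith) (by linarith) (Y.continuous.pow 2)
  have s3 : ∑ i ∈ Finset.range m, ∫ u in Ioo (0 : ℝ) 1, (Y * f i).eval u ^ 2 * bw (d / 2) (d / 2) u ≤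
      C₁ * ((∫ u in Ioo (0 : ℝ) 1, Y.eval u ^ 2 * bw (d / 2 + s) (d / 2 - 2 + 1) u) +
        (n : ℝ) ^ (-(2 * s)) * ∫ u in Ioo (0 : ℝ) 1, Y.eval u ^ 2 * bw (d / 2) (d / 2 - 2 + 1) u) := by
    have j2 := pint2 0 le_rfl
    rw [add_zero] at j2
    rw [← integral_finsetSum _ fun i _ => pint (Y * f i), ← integral_const_mul,
      ← integral_add (pint2 s hs) (j2.const_mul _), ← integral_const_mul]
    refine setIntegral_mono_on (integrable_finsetSum _ fun i _ => pint (Y * f i))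
      (((pint2 s hs).add (j2.const_mul _)).const_mul _) measurableSet_Ioo fun u hu => ?_
    have u0 := hu.1
    have u1 : 0 < 1 - u := by linarith [hu.2]
    have b1 : bw (d / 2) (d / 2) u ≤ bw (d / 2) (d / 2 - 2 + 1) u := by
      unfold bw
      gcongr ?_ * ?_
      exact Real.rpow_le_rpow_of_exponent_ge u1 (by linarith) (by linarith)
    have b2 : u ^ s * bw (d / 2) (d / 2 - 2 + 1) u = bw (d / 2 + s) (d / 2 - 2 + 1) u := by
      unfold bw
      rw [← mul_assoc, ← Real.rpow_add u0]
      congr 2; ring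
    have b3 := (hF u u0.le hu.2.le).2
    have b4 := bw_pos (a := (d : ℝ) / 2) (b := d / 2 - 2 + 1) hu
    have b5 := bw_pos (a := (d : ℝ) / 2) (b := d / 2) hu
    simp only [Polynomial.eval_mul, mul_pow]
    rw [← Finset.sum_mul, ← Finset.mul_sum]
    have b6 : 0 ≤ u ^ s := Real.rpow_nonneg u0.le _
    have b7 : 0 ≤ (n : ℝ) ^ (-(2 * s)) := Real.rpow_nonneg n0.le _
    calc _ ≤ Y.eval u ^ 2 * (C₁ * (u ^ s + (n : ℝ) ^ (-(2 * s)))) * bw (d / 2) (d / 2 - 2 + 1) u := by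
          gcongr
      _ = _ := by rw [← b2]; ring
  have I₁0 : 0 ≤ I₁ := moment_nonneg _ _ _ _ _
  have s4 : (n : ℝ) ^ (-(2 * s)) * (n : ℝ) ^ (2 * r) = (n : ℝ) ^ (2 * (r - s)) := by
    rw [← Real.rpow_add n0]; congr 1; ring
  have s5 : (n : ℝ) ^ (-(2 * s)) * (∫ u in Ioo (0 : ℝ) 1, Y.eval u ^ 2 * bw (d / 2) (d / 2 - 2 + 1) u) ≤
      G * (n : ℝ) ^ (2 * (r - s)) * I₁ := by
    rw [← s4]
    calc _ ≤ (n : ℝ) ^ (-(2 * s)) * (G * (n : ℝ) ^ (2 * r) * I₁) := by gcongr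
      _ = _ := by ring
  refine s1.trans ?_
  rw [integral_const_mul, integral_finsetSum _ fun i _ => cint (ci i)]
  calc _ ≤ 2 ^ s * ∑ i ∈ Finset.range m,
        c * ((∫ u in Ioo (0 : ℝ) 1, (Y * f i).eval u ^ 2 * bw (d / 2) (d / 2) u) / Tm d 0) := by
        gcongr with i _; exact s2 i
    _ = c * (2 ^ s / Tm d 0 * ∑ i ∈ Finset.range m,
        ∫ u in Ioo (0 : ℝ) 1, (Y * f i).eval u ^ 2 * bw (d / 2) (d / 2) u) := by
        rw [← Finset.mul_sum, ← Finset.sum_div]; ring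
    _ ≤ c * (2 ^ s / Tm d 0 * (C₁ * (G * (n : ℝ) ^ (2 * (r - s)) * I₁ +
        G * (n : ℝ) ^ (2 * (r - s)) * I₁))) := by
        refine mul_le_mul_of_nonneg_left (mul_le_mul_of_nonneg_left (s3.trans ?_) (by positivity)) hc
        gcongr
    _ = _ := by ring

theorem phiTilde_lebesgue_bound :
    ∀ r s : ℝ, 0 ≤ s → s ≤ r → ∃ C : ℝ, 0 < C ∧
      ∀ (d n : ℕ) (ν : SignedMeasure (Sph d)) (c : ℝ),
        3 ≤ d → ((d : ℝ) + r + 1) ^ 2 ≤ (n : ℝ) * d →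
        IsMZ d ((2 * (d + 2) * n : ℕ) : ℝ) ν c →
        ∀ x : Sph d,
          (∫ y, |PhiTilde d n r (ip x y)| * (1 - ip x y) ^ (s / 2) ∂ν.totalVariation) ≤
            C * (d : ℝ) ^ ((1 : ℝ)/6) * (n : ℝ) ^ (-s) * c := by
  intro r s hs hsr
  have hr : 0 ≤ r := hs.trans hsr
  obtain ⟨C₁, hC₁, hg⟩ := g_part r s hs hsr
  obtain ⟨C₂, hC₂, hrat⟩ := ratio_bound r hr
  refine ⟨√(C₁ * C₂), Real.sqrt_pos.2 (by positivity), fun d n ν c hd hnd h x => ?_⟩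
  have h3 : (3 : ℝ) ≤ d := by exact_mod_cast hd
  have hn := n_ge hd hr hnd
  have n0 : (0 : ℝ) < n := by linarith
  have n0' : 0 < n := by exact_mod_cast n0
  have T0 := Tm_zero_pos d (by omega)
  have : IsFiniteMeasure ν.totalVariation := by
    unfold SignedMeasure.totalVariation; infer_instance
  have := sphMeasure_prob d
  have hc : 0 ≤ c := by
    have h1 := h (fun _ => 1) ⟨1, by
      simp only [MvPolynomial.totalDegree_one]
      push_cast; positivity, by simp⟩
    simp only [one_pow, integral_const, probReal_univ, smul_eq_mul, mul_one] at h1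
    exact measureReal_nonneg.trans h1
  have kp := K_part hd n0' h x
  have gp := hg d n ν c hd hn hc h x
  have rt := hrat d n hd hn
  have jk := jacobiK_one_le d ((d + 2) * n) hd
  set Y := Yp ((d : ℝ) / 2 + r) (d / 2 - 2) (d * n) with hY
  set I₁ := ∫ u in Ioo (0:ℝ) 1, Y.eval u ^ 2 * bw (d / 2 + r) (d / 2 - 2 + 1) u with hI
  have I₁0 : 0 ≤ I₁ := moment_nonneg _ _ _ _ _
  set κ := 2 ^ ((d : ℝ) - 1) * jacobiK ((d : ℝ) / 2 - 1) ((d : ℝ) / 2 - 1) ((d + 2) * n) 1 with hκ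
  have Y0 : 0 < Y.eval 0 := by
    rw [hY, Yp_eval_zero]
    have : (0 : ℝ) ≤ ((d * n : ℕ) : ℝ) := by positivity
    exact div_pos (Gamma_pos_of_pos (by linarith)) (Gamma_pos_of_pos (by linarith))
  have hnrm := nrm_pos (α := (d : ℝ) / 2 + r) (β := d / 2 - 2) (by linarith) (by linarith)
    (by linarith) (d * n)
  have hip := ip_cont x
  -- rewriting the integrand
  have e1 : ∀ y, |PhiTilde d n r (ip x y)| * (1 - ip x y) ^ (s / 2) =
      |sphK d ((d + 2) * n) (ip x y)| *
        |(1 / Y.eval 0) * (Y.eval ((1 - ip x y) / 2) * (1 - ip x y) ^ (s / 2))| := by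
    intro y
    have hu := (ip_mem x y).1
    have h0 : 0 ≤ (1 - ip x y) ^ (s / 2) := Real.rpow_nonneg (by linarith) _
    rw [PhiTilde, jacobiP_eq, jacobiP_eq, sub_self, zero_div, ← hY, mul_div_mul_left _ _ hnrm.ne',
      abs_mul, abs_mul (1 / Y.eval 0), abs_mul _ ((1 - ip x y) ^ (s / 2)), abs_of_nonneg h0, abs_div,
      abs_div, abs_one]
    ring
  simp only [e1]
  have cf : Continuous fun y => sphK d ((d + 2) * n) (ip x y) := by
    have : ∀ y, sphK d ((d + 2) * n) (ip x y) = omegaS d / omegaS (d - 1) *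
        (KP ((d : ℝ) / 2 - 1) ((d + 2) * n)).eval ((1 - ip x y) / 2) := by
      intro y; rw [sphK, KP_eval]
    simp only [this]
    have := (KP ((d : ℝ) / 2 - 1) ((d + 2) * n)).continuous
    fun_prop
  have cg : Continuous fun y =>
      (1 / Y.eval 0) * (Y.eval ((1 - ip x y) / 2) * (1 - ip x y) ^ (s / 2)) := by
    have h1 : Continuous fun t : ℝ => t ^ (s / 2) := Real.continuous_rpow_const (by linarith)
    have h2 := Y.continuous
    fun_prop
  have gp' : ∫ y, ((1 / Y.eval 0) * (Y.eval ((1 - ip x y) / 2) * (1 - ip x y) ^ (s / 2))) ^ 2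
      ∂ν.totalVariation ≤ (1 / Y.eval 0) ^ 2 * (c * (C₁ * (n : ℝ) ^ (2 * (r - s)) / Tm d 0 * I₁)) := by
    simp only [mul_pow (1 / Y.eval 0)]
    rw [integral_const_mul]
    gcongr
  have pn : (0 : ℝ) < (n : ℝ) ^ (-s) := Real.rpow_pos_of_pos n0 _
  have main := cs_bound ν.totalVariation cf cg kp gp' (R := √(C₁ * C₂) * (n : ℝ) ^ (-s) * c)
    (by positivity) (by
      have q1 : κ * (I₁ / Y.eval 0 ^ 2) ≤ C₂ * (n : ℝ) ^ (-(2 * r)) :=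
        le_trans (by gcongr) rt
      have q2 : (n : ℝ) ^ (-(2 * r)) * (n : ℝ) ^ (2 * (r - s)) = ((n : ℝ) ^ (-s)) ^ 2 := by
        rw [← Real.rpow_add n0, ← Real.rpow_natCast, ← Real.rpow_mul n0.le]
        congr 1; push_cast; ring
      rw [mul_pow, mul_pow, Real.sq_sqrt (by positivity), ← q2]
      have pr := Real.rpow_pos_of_pos n0 (2 * (r - s))
      calc c * (Tm d 0 * κ) * ((1 / Y.eval 0) ^ 2 * (c * (C₁ * (n : ℝ) ^ (2 * (r - s)) / Tm d 0 * I₁)))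
          = c ^ 2 * C₁ * (n : ℝ) ^ (2 * (r - s)) * (κ * (I₁ / Y.eval 0 ^ 2)) := by
            field_simp
        _ ≤ c ^ 2 * C₁ * (n : ℝ) ^ (2 * (r - s)) * (C₂ * (n : ℝ) ^ (-(2 * r))) := by gcongr
        _ = _ := by ring)
  refine main.trans ?_
  have hd6 : (1 : ℝ) ≤ (d : ℝ) ^ ((1 : ℝ)/6) := Real.one_le_rpow (by linarith) (by norm_num)
  have : √(C₁ * C₂) * 1 * (n : ℝ) ^ (-s) * c ≤ √(C₁ * C₂) * (d : ℝ) ^ ((1 : ℝ)/6) * (n : ℝ) ^ (-s) * c := by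
    gcongr
  linarith

end
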